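/- arXiv:2102.03855 — 2 statements merged into one kernel-verified Lean document; each statement's English description precedes it below -/
import Mathlib

section
/- Let k ≥ 0 be an integer and let G be a simple graph of order n ≥ max{6k+11, (k+3)(k+4)/2}. If e(G) ≥ C(n−k−1, 2) + C(k+2, 2), then G is weakly pancyclic with girth 3, and moreover one of the following holds: (a) G contains a cycle C_ℓ for every integer ℓ with 3 ≤ ℓ ≤ n−k; or (b) G is isomorphic to L_{n,k+1} = K_1 ∨ (K_{n−k−2} + K_{k+1}). -/
open SimpleGraph

/-- `G` contains a cycle of length `l`. -/
def HasCycleLen {V : Type} (G : SimpleGraph V) (l : ℕ) : Prop :=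
  ∃ (v : V) (c : G.Walk v v), c.IsCycle ∧ c.length = l

/-- The circumference of `G`: the length of a longest cycle. -/
noncomputable def circumference {V : Type} (G : SimpleGraph V) : ℕ :=
  sSup {l | HasCycleLen G l}

/-- `G` is weakly pancyclic with girth 3: it contains a cycle of every length `l`
with `3 ≤ l ≤ c(G)`. -/
def WeaklyPancyclic3 {V : Type} (G : SimpleGraph V) : Prop :=
  HasCycleLen G 3 ∧ ∀ l : ℕ, 3 ≤ l → l ≤ circumference G → HasCycleLen G l

/-- The number of edges of `G`. -/
noncomputable def edgeCount {V : Type} (G : SimpleGraph V) : ℕ :=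
  Nat.card G.edgeSet

/-- The degree of `v` in `G`. -/
noncomputable def degCount {V : Type} (G : SimpleGraph V) (v : V) : ℕ :=
  Nat.card (G.neighborSet v)

/-- The spectral radius of `G`: the largest eigenvalue of the adjacency matrix. -/
noncomputable def specRad {V : Type} [Finite V] (G : SimpleGraph V) : ℝ :=
  letI := Fintype.ofFinite V
  letI := Classical.decEq V
  letI := Classical.decRel G.Adj
  sSup (spectrum ℝ (G.adjMatrix ℝ))

/-- The signless Laplacian spectral radius of `G`: the largest eigenvalue of `D(G) + A(G)`. -/
noncomputable def qSpecRad {V : Type} [Finite V] (G : SimpleGraph V) : ℝ :=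
  letI := Fintype.ofFinite V
  letI := Classical.decEq V
  letI := Classical.decRel G.Adj
  sSup (spectrum ℝ (Matrix.diagonal (fun v => (degCount G v : ℝ)) + G.adjMatrix ℝ))

/-- `L_{n,k} = K_1 ∨ (K_{n-k-1} + K_k)`: vertex `0` is the common vertex of a clique on
the `n - k` vertices `{0, …, n-k-1}` and a clique on the `k+1` vertices `{0} ∪ {n-k, …, n-1}`. -/
def Lgraph (n k : ℕ) : SimpleGraph (Fin n) :=
  SimpleGraph.fromRel (fun u v =>
    u.val = 0 ∨ v.val = 0 ∨ (u.val < n - k ∧ v.val < n - k) ∨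
      (n - k ≤ u.val ∧ n - k ≤ v.val))

/-- `Γ_{n,t} = K_2 ∨ (K_{n-2-t} + t·K_1)`: vertices `0,1` are joined to everything,
vertices `2, …, n-t-1` form a clique, and vertices `n-t, …, n-1` are independent. -/
def GammaGraph (n t : ℕ) : SimpleGraph (Fin n) :=
  SimpleGraph.fromRel (fun u v =>
    u.val < 2 ∨ v.val < 2 ∨ (u.val < n - t ∧ v.val < n - t))

/-- `F` is a member of the family `F_{n,k}`: there is a clique `K` on `n - k` vertices
such that each connected component of `F - K` is a clique all of whose vertices are
adjacent to one single common vertex of `K` and to no other vertex of `K`. -/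
def MemF (n k : ℕ) (F : SimpleGraph (Fin n)) : Prop :=
  ∃ K : Finset (Fin n), K.card = n - k ∧ F.IsClique (↑K : Set (Fin n)) ∧
    (∀ u v : ({x : Fin n | x ∉ K} : Set (Fin n)),
      (F.induce {x : Fin n | x ∉ K}).Reachable u v → (u = v ∨ F.Adj u.1 v.1)) ∧
    (∀ u : ({x : Fin n | x ∉ K} : Set (Fin n)), ∃! w : Fin n, w ∈ K ∧ F.Adj u.1 w) ∧
    (∀ u v : ({x : Fin n | x ∉ K} : Set (Fin n)),
      (F.induce {x : Fin n | x ∉ K}).Reachable u v →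
        ∀ w ∈ K, F.Adj u.1 w → F.Adj v.1 w)

/-- `G` is a subgraph of `H` (up to relabelling): there is an injective graph
homomorphism from `G` to `H`. -/
def IsSubgraphOf {n : ℕ} (G H : SimpleGraph (Fin n)) : Prop :=
  ∃ f : G →g H, Function.Injective f

/-- Functional form of a cycle of length `l` inside `S`. -/
def HC {V : Type} (G : SimpleGraph V) (S : Finset V) (l : ℕ) : Prop :=
  3 ≤ l ∧ ∃ f : ℕ → V, (∀ i < l, f i ∈ S) ∧ (∀ i < l, ∀ j < l, f i = f j → i = j) ∧
    (∀ i, i + 1 < l → G.Adj (f i) (f (i + 1))) ∧ G.Adj (f (l - 1)) (f 0)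

theorem walkOf {V : Type} (G : SimpleGraph V) (f : ℕ → V) (m : ℕ)
    (hinj : ∀ i ≤ m, ∀ j ≤ m, f i = f j → i = j)
    (hadj : ∀ i < m, G.Adj (f i) (f (i + 1))) :
    ∃ p : G.Walk (f 0) (f m), p.length = m ∧ p.IsPath ∧ (∀ x ∈ p.support, ∃ i ≤ m, x = f i) ∧
      ∀ e ∈ p.edges, ∃ i < m, e = s(f i, f (i + 1)) := by
  induction m with
  | zero => exact ⟨Walk.nil, by simp⟩
  | succ m ih =>
    obtain ⟨p, h1, h2, h3, h4⟩ := ih (fun i hi j hj => hinj i (by omega) j (by omega))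
      (fun i hi => hadj i (by omega))
    have ha := hadj m (by omega)
    refine ⟨p.concat ha, by simp [h1], ?_, ?_, ?_⟩
    · apply h2.concat
      intro hx
      obtain ⟨i, hi, hx⟩ := h3 _ hx
      have := hinj _ (by omega) _ (by omega) hx
      omega
    · intro x hx
      rw [Walk.support_concat] at hx
      simp at hx
      rcases hx with hx | hx
      · obtain ⟨i, hi, hx⟩ := h3 _ hx
        exact ⟨i, by omega, hx⟩
      · exact ⟨m + 1, le_rfl, hx⟩
    · intro e he
      rw [Walk.edges_concat] at he
      simp at he
      rcases he with he | he
      · obtain ⟨i, hi, he⟩ := h4 _ he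
        exact ⟨i, by omega, he⟩
      · exact ⟨m, by omega, he⟩

theorem HC.hasCycleLen {V : Type} {G : SimpleGraph V} {S : Finset V} {l : ℕ} (h : HC G S l) :
    HasCycleLen G l := by
  obtain ⟨hl, f, -, hinj, hadj, hclose⟩ := h
  obtain ⟨m, rfl⟩ : ∃ m, l = m + 1 := ⟨l - 1, by omega⟩
  obtain ⟨p, h1, h2, h3, h4⟩ := walkOf G f m (fun i hi j hj => hinj i (by omega) j (by omega))
      (fun i hi => hadj i (by omega))
  refine ⟨f m, Walk.cons hclose p, ?_, by simp [h1]⟩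
  rw [Walk.cons_isCycle_iff]
  refine ⟨h2, fun he => ?_⟩
  obtain ⟨i, hi, he⟩ := h4 _ he
  rw [Sym2.eq_iff] at he
  rcases he with ⟨h, h'⟩ | ⟨h, h'⟩
  · have := hinj _ (by omega) _ (by omega) h
    omega
  · have := hinj _ (by omega) _ (by omega) h
    have := hinj _ (by omega) _ (by omega) h'
    omega

theorem HasCycleLen.hc {V : Type} [Fintype V] {G : SimpleGraph V} {l : ℕ} (h : HasCycleLen G l) :
    HC G Finset.univ l := by
  obtain ⟨v, c, hc, rfl⟩ := h
  have h3 := hc.three_le_length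
  refine ⟨h3, c.getVert, by simp, ?_, ?_, ?_⟩
  · intro i hi j hj hij
    exact hc.getVert_injOn' (by simp; omega) (by simp; omega) hij
  · intro i hi
    exact c.adj_getVert_succ (by omega)
  · have := c.adj_getVert_succ (i := c.length - 1) (by omega)
    rw [show c.length - 1 + 1 = c.length by omega] at this
    simpa using this

theorem hc_of_list {V : Type} {G : SimpleGraph V} {S : Finset V} (L : List V) (a b : V)
    (h3 : 1 ≤ L.length)
    (hS : ∀ x ∈ a :: (L ++ [b]), x ∈ S) (hn : (a :: (L ++ [b])).Nodup)
    (hch : (a :: (L ++ [b])).IsChain G.Adj) (hcl : G.Adj b a) : HC G S (L.length + 2) := by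
  refine ⟨by omega, fun i => (a :: (L ++ [b])).getD i a, ?_, ?_, ?_, ?_⟩
  · intro i hi
    have hi' : i < (a :: (L ++ [b])).length := by simp; omega
    beta_reduce
    rw [List.getD_eq_getElem _ _ hi']
    exact hS _ (List.getElem_mem _)
  · intro i hi j hj hij
    have hi' : i < (a :: (L ++ [b])).length := by simp; omega
    have hj' : j < (a :: (L ++ [b])).length := by simp; omega
    simp only [List.getD_eq_getElem _ _ hi', List.getD_eq_getElem _ _ hj'] at hij
    exact (List.Nodup.getElem_inj_iff hn).1 hij
  · intro i hi
    have hi' : i < (a :: (L ++ [b])).length := by simp; omega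
    have hj' : i + 1 < (a :: (L ++ [b])).length := by simp; omega
    simp only [List.getD_eq_getElem _ _ hi', List.getD_eq_getElem _ _ hj']
    exact List.isChain_iff_getElem.1 hch i hj'
  · have : (a :: (L ++ [b])).getD (L.length + 1) a = b := by simp
    simpa [this] using hcl

/-- crossing lemma -/
theorem cross {V : Type} {G : SimpleGraph V} {S : Finset V} (p : ℕ → V) (m i j : ℕ)
    (hS : ∀ t ≤ m, p t ∈ S) (hinj : ∀ s ≤ m, ∀ t ≤ m, p s = p t → s = t)
    (hadj : ∀ t < m, G.Adj (p t) (p (t + 1))) (hij : i < j) (hj : j ≤ m)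
    (h0 : G.Adj (p 0) (p j)) (hm : G.Adj (p m) (p i)) (h3 : 3 ≤ i + 1 + (m - j + 1)) :
    HC G S (i + 1 + (m - j + 1)) := by
  refine ⟨h3, fun t => p (if t ≤ i then t else m + i + 1 - t), ?_, ?_, ?_, ?_⟩
  · intro t ht
    apply hS
    split_ifs <;> omega
  · intro s hs t ht hst
    have := hinj _ (by split_ifs <;> omega) _ (by split_ifs <;> omega) hst
    split_ifs at this <;> omega
  · intro t ht
    beta_reduce
    rcases lt_trichotomy t i with h | h | h
    · rw [if_pos (by omega), if_pos (by omega)]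
      exact hadj t (by omega)
    · subst h
      rw [if_pos (by omega), if_neg (by omega), show m + t + 1 - (t + 1) = m by omega]
      exact hm.symm
    · rw [if_neg (by omega), if_neg (by omega)]
      have := hadj (m + i + 1 - (t + 1)) (by omega)
      rw [show m + i + 1 - (t + 1) + 1 = m + i + 1 - t by omega] at this
      exact this.symm
  · beta_reduce
    rw [if_neg (by omega), if_pos (by omega),
      show m + i + 1 - (i + 1 + (m - j + 1) - 1) = j by omega]
    exact h0.symm

/-- short cycle through the closing edge -/
theorem shortcut {V : Type} {G : SimpleGraph V} {S : Finset V} (p : ℕ → V) (m j l : ℕ)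
    (hS : ∀ t ≤ m, p t ∈ S) (hinj : ∀ s ≤ m, ∀ t ≤ m, p s = p t → s = t)
    (hadj : ∀ t < m, G.Adj (p t) (p (t + 1))) (hj : 1 ≤ j) (hl : 3 ≤ l) (hjl : j + (l - 3) < m)
    (h0 : G.Adj (p 0) (p j)) (hm : G.Adj (p m) (p (j + (l - 3)))) (hcl : G.Adj (p m) (p 0)) :
    HC G S l := by
  refine ⟨hl, fun t => p (if t = 0 then 0 else if t = l - 1 then m else j + (t - 1)), ?_, ?_, ?_, ?_⟩
  · intro t ht
    apply hS
    split_ifs <;> omega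
  · intro s hs t ht hst
    have := hinj _ (by split_ifs <;> omega) _ (by split_ifs <;> omega) hst
    split_ifs at this <;> omega
  · intro t ht
    beta_reduce
    rw [if_neg (by omega : ¬ t + 1 = 0)]
    rcases Nat.eq_zero_or_pos t with h | h
    · subst h
      rw [if_pos rfl, if_neg (by omega)]
      simpa using h0
    · rw [if_neg (by omega), if_neg (by omega)]
      by_cases h' : t + 1 = l - 1
      · rw [if_pos h', show j + (t - 1) = j + (l - 3) by omega]
        exact hm.symm
      · rw [if_neg h']
        have := hadj (j + (t - 1)) (by omega)
        rwa [show j + (t - 1) + 1 = j + (t + 1 - 1) by omega] at this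
  · beta_reduce
    rw [if_neg (by omega), if_pos rfl, if_pos rfl]
    exact hcl

theorem clique_list {V : Type} {G : SimpleGraph V} (T : List V) (hT : T.Nodup)
    (h : ∀ u ∈ T, ∀ v ∈ T, u ≠ v → G.Adj u v) : T.IsChain G.Adj := by
  apply List.Pairwise.isChain
  rw [List.pairwise_iff_getElem]
  intro i j hi hj hij
  apply h _ (List.getElem_mem _) _ (List.getElem_mem _)
  intro he
  have := (List.Nodup.getElem_inj_iff hT).1 he
  omega

theorem clique_hc {V : Type} {G : SimpleGraph V} (S : Finset V)
    (h : ∀ u ∈ S, ∀ v ∈ S, u ≠ v → G.Adj u v) (l : ℕ) (hl : 3 ≤ l) (hlS : l ≤ S.card) :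
    HC G S l := by
  classical
  obtain ⟨T, hTS, hT⟩ := Finset.exists_subset_card_eq hlS
  obtain ⟨a, ha, b, hb, hab⟩ := Finset.one_lt_card.1 (by omega : 1 < T.card)
  have hc : ((T.erase a).erase b).toList.length + 2 = l := by
    rw [Finset.length_toList, Finset.card_erase_of_mem (by simp [hab.symm, hb]),
      Finset.card_erase_of_mem ha]
    omega
  rw [← hc]
  have hm : ∀ x ∈ a :: (((T.erase a).erase b).toList ++ [b]), x ∈ T := by
    intro x hx
    simp at hx
    rcases hx with rfl | hx | rfl
    · exact ha
    · exact hx.2.2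
    · exact hb
  have hnd : (a :: (((T.erase a).erase b).toList ++ [b])).Nodup := by
    simp [List.nodup_append, Finset.nodup_toList, hab]
    grind
  refine hc_of_list _ a b (by omega) (fun x hx => hTS (hm x hx)) hnd
    (clique_list _ hnd (fun u hu v hv => h u (hTS (hm u hu)) v (hTS (hm v hv))))
    (h _ (hTS hb) _ (hTS ha) hab.symm)

/-- vertex with two neighbours in a clique -/
theorem clique_add {V : Type} [DecidableEq V] {G : SimpleGraph V} (S Q : Finset V) (v a b : V)
    (hv : v ∈ S) (hQ : Q ⊆ S)
    (h : ∀ u ∈ Q, ∀ v ∈ Q, u ≠ v → G.Adj u v) (hvQ : v ∉ Q) (ha : a ∈ Q) (hb : b ∈ Q)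
    (hab : a ≠ b) (hva : G.Adj v a) (hvb : G.Adj v b) : HC G S (Q.card + 1) := by
  have hc1 : 1 < Q.card := Finset.one_lt_card.2 ⟨a, ha, b, hb, hab⟩
  have hc : (a :: ((Q.erase a).erase b).toList).length + 2 = Q.card + 1 := by
    rw [List.length_cons, Finset.length_toList, Finset.card_erase_of_mem (by simp [hab.symm, hb]),
      Finset.card_erase_of_mem ha]
    omega
  rw [← hc]
  have hm : ∀ x ∈ a :: (((Q.erase a).erase b).toList ++ [b]), x ∈ Q := by
    intro x hx
    simp at hx
    rcases hx with rfl | hx | rfl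
    · exact ha
    · exact hx.2.2
    · exact hb
  have hnd : (a :: (((Q.erase a).erase b).toList ++ [b])).Nodup := by
    simp [List.nodup_append, Finset.nodup_toList, hab]
    grind
  have hch := clique_list _ hnd (fun u hu v hv => h u (hm u hu) v (hm v hv))
  refine hc_of_list _ v b (by simp) ?_ ?_ ?_ hvb.symm
  · intro x hx
    rw [List.mem_cons] at hx
    rcases hx with rfl | hx
    · exact hv
    · exact hQ (hm x hx)
  · exact List.nodup_cons.2 ⟨fun hx => hvQ (hm _ hx), hnd⟩
  · exact List.isChain_cons_cons.2 ⟨hva, hch⟩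

/-- an ear with two internal vertices on a clique -/
theorem clique_add2 {V : Type} [DecidableEq V] {G : SimpleGraph V} (S Q : Finset V) (v w a b : V)
    (hv : v ∈ S) (hw : w ∈ S) (hvw : G.Adj w v) (hQ : Q ⊆ S)
    (h : ∀ u ∈ Q, ∀ v ∈ Q, u ≠ v → G.Adj u v) (hvQ : v ∉ Q) (hwQ : w ∉ Q) (ha : a ∈ Q) (hb : b ∈ Q)
    (hab : a ≠ b) (hva : G.Adj v a) (hwb : G.Adj w b) : HC G S (Q.card + 2) := by
  have hc1 : 1 < Q.card := Finset.one_lt_card.2 ⟨a, ha, b, hb, hab⟩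
  have hc : (v :: a :: ((Q.erase a).erase b).toList).length + 2 = Q.card + 2 := by
    rw [List.length_cons, List.length_cons, Finset.length_toList,
      Finset.card_erase_of_mem (by simp [hab.symm, hb]), Finset.card_erase_of_mem ha]
    omega
  rw [← hc]
  have hm : ∀ x ∈ a :: (((Q.erase a).erase b).toList ++ [b]), x ∈ Q := by
    intro x hx
    simp at hx
    rcases hx with rfl | hx | rfl
    · exact ha
    · exact hx.2.2
    · exact hb
  have hnd : (a :: (((Q.erase a).erase b).toList ++ [b])).Nodup := by
    simp [List.nodup_append, Finset.nodup_toList, hab]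
    grind
  have hch := clique_list _ hnd (fun u hu v hv => h u (hm u hu) v (hm v hv))
  refine hc_of_list _ w b (by simp) ?_ ?_ ?_ hwb.symm
  · intro x hx
    rw [List.mem_cons] at hx
    rcases hx with rfl | hx
    · exact hw
    rw [List.cons_append, List.mem_cons] at hx
    rcases hx with rfl | hx
    · exact hv
    · exact hQ (hm x hx)
  · refine List.nodup_cons.2 ⟨fun hx => ?_, List.nodup_cons.2 ⟨fun hx => hvQ (hm _ hx), hnd⟩⟩
    rw [List.cons_append, List.mem_cons] at hx
    rcases hx with hx | hx
    · exact hvw.ne hx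
    · exact hwQ (hm _ hx)
  · exact List.isChain_cons_cons.2 ⟨hvw, List.isChain_cons_cons.2 ⟨hva, hch⟩⟩

open Classical in
/-- number of non-neighbours of `v` in `S` -/
noncomputable def nd {V : Type} (G : SimpleGraph V) (S : Finset V) (v : V) : ℕ :=
  (S.filter (fun w => w ≠ v ∧ ¬ G.Adj v w)).card

open Classical in
theorem le_nd {V : Type} (G : SimpleGraph V) (S T : Finset V) (v : V)
    (h : ∀ w ∈ T, w ∈ S ∧ w ≠ v ∧ ¬ G.Adj v w) : T.card ≤ nd G S v := by
  unfold nd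
  apply Finset.card_le_card
  intro w hw
  rw [Finset.mem_filter]
  exact h w hw

/-- number of ordered nonadjacent pairs in `S` -/
noncomputable def NN {V : Type} (G : SimpleGraph V) (S : Finset V) : ℕ := ∑ v ∈ S, nd G S v

open Classical in
theorem cnt {V : Type} {G : SimpleGraph V} {S : Finset V} (v : V) (I : Finset ℕ) (φ : ℕ → V)
    (hS : ∀ i ∈ I, φ i ∈ S) (hv : ∀ i ∈ I, φ i ≠ v)
    (hinj : ∀ i ∈ I, ∀ j ∈ I, φ i = φ j → i = j) :
    (I.filter (fun i => ¬ G.Adj v (φ i))).card ≤ nd G S v := by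
  unfold nd
  apply Finset.card_le_card_of_injOn φ
  · intro i hi
    simp only [Finset.coe_filter, Set.mem_ofPred_eq] at hi ⊢
    exact ⟨hS i hi.1, hv i hi.1, hi.2⟩
  · intro i hi j hj hij
    simp only [Finset.coe_filter, Set.mem_ofPred_eq] at hi hj
    exact hinj i hi.1 j hj.1 hij

theorem pigeon {V : Type} {G : SimpleGraph V} {S : Finset V} (u v : V) (I : Finset ℕ) (φ ψ : ℕ → V)
    (hS : ∀ i ∈ I, φ i ∈ S) (hv : ∀ i ∈ I, φ i ≠ u)
    (hinj : ∀ i ∈ I, ∀ j ∈ I, φ i = φ j → i = j)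
    (hS' : ∀ i ∈ I, ψ i ∈ S) (hv' : ∀ i ∈ I, ψ i ≠ v)
    (hinj' : ∀ i ∈ I, ∀ j ∈ I, ψ i = ψ j → i = j) (hc : nd G S u + nd G S v < I.card) :
    ∃ i ∈ I, G.Adj u (φ i) ∧ G.Adj v (ψ i) := by
  classical
  by_contra! hcon
  have h1 := cnt (G := G) u I φ hS hv hinj
  have h2 := cnt (G := G) v I ψ hS' hv' hinj'
  have h3 : I ⊆ I.filter (fun i => ¬ G.Adj u (φ i)) ∪ I.filter (fun i => ¬ G.Adj v (ψ i)) := by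
    intro i hi
    simp only [Finset.mem_union, Finset.mem_filter]
    by_cases h : G.Adj u (φ i)
    · exact Or.inr ⟨hi, hcon i hi h⟩
    · exact Or.inl ⟨hi, h⟩
  have h4 := (Finset.card_le_card h3).trans (Finset.card_union_le _ _)
  omega

theorem rotate {V : Type} {G : SimpleGraph V} {S : Finset V} {l : ℕ} (hl : 3 ≤ l) (f : ℕ → V)
    (hS : ∀ i < l, f i ∈ S) (hinj : ∀ i < l, ∀ j < l, f i = f j → i = j)
    (hadj : ∀ i, i + 1 < l → G.Adj (f i) (f (i + 1))) (hcl : G.Adj (f (l - 1)) (f 0))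
    (i0 : ℕ) (hi0 : i0 < l) :
    ∃ p : ℕ → V, (∀ i < l, p i ∈ S) ∧ (∀ i < l, ∀ j < l, p i = p j → i = j) ∧
    (∀ i, i + 1 < l → G.Adj (p i) (p (i + 1))) ∧ G.Adj (p (l - 1)) (p 0) ∧
    p (l - 1) = f i0 ∧ p 0 = f ((i0 + 1) % l) := by
  have key : ∀ t, G.Adj (f (t % l)) (f ((t + 1) % l)) := by
    intro t
    have hr : t % l < l := Nat.mod_lt _ (by omega)
    have : (t + 1) % l = (t % l + 1) % l := by simp
    rw [this]
    by_cases h : t % l + 1 < l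
    · rw [Nat.mod_eq_of_lt h]
      exact hadj _ h
    · have h' : t % l = l - 1 := by omega
      rw [h', show l - 1 + 1 = l by omega, Nat.mod_self]
      exact hcl
  refine ⟨fun t => f ((t + (i0 + 1)) % l), ?_, ?_, ?_, ?_, ?_, ?_⟩
  · intro i _
    exact hS _ (Nat.mod_lt _ (by omega))
  · intro i hi j hj hij
    have := hinj _ (Nat.mod_lt _ (by omega)) _ (Nat.mod_lt _ (by omega)) hij
    have h2 : i ≡ j [MOD l] := Nat.ModEq.add_right_cancel' (i0 + 1) this
    exact Nat.ModEq.eq_of_lt_of_lt h2 hi hj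
  · intro i _
    have := key (i + (i0 + 1))
    beta_reduce
    rwa [show i + 1 + (i0 + 1) = i + (i0 + 1) + 1 by omega]
  · have := key (l - 1 + (i0 + 1))
    rw [show l - 1 + (i0 + 1) + 1 = 0 + (i0 + 1) + l by omega, Nat.add_mod_right] at this
    exact this
  · beta_reduce
    rw [show l - 1 + (i0 + 1) = i0 + l by omega, Nat.add_mod_right, Nat.mod_eq_of_lt hi0]
  · simp

theorem ore_path {V : Type} {G : SimpleGraph V} {S : Finset V} {l : ℕ} (hl : 3 ≤ l) (p : ℕ → V)
    (hS : ∀ i < l, p i ∈ S) (hinj : ∀ i < l, ∀ j < l, p i = p j → i = j)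
    (hadj : ∀ i, i + 1 < l → G.Adj (p i) (p (i + 1)))
    (hnd : nd G S (p 0) + nd G S (p (l - 1)) + 2 ≤ l) : HC G S l := by
  obtain ⟨i, hi, h1, h2⟩ := pigeon (G := G) (S := S) (p 0) (p (l - 1)) (Finset.range (l - 1))
    (fun i => p (i + 1)) p
    (by intro i hi; rw [Finset.mem_range] at hi; exact hS _ (by omega))
    (by intro i hi h; rw [Finset.mem_range] at hi; have := hinj _ (by omega) _ (by omega) h; omega)
    (by
      intro i hi j hj h
      rw [Finset.mem_range] at hi hj
      have := hinj _ (by omega) _ (by omega) h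
      omega)
    (by intro i hi; rw [Finset.mem_range] at hi; exact hS _ (by omega))
    (by intro i hi h; rw [Finset.mem_range] at hi; have := hinj _ (by omega) _ (by omega) h; omega)
    (by
      intro i hi j hj h
      rw [Finset.mem_range] at hi hj
      exact hinj _ (by omega) _ (by omega) h)
    (by rw [Finset.card_range]; omega)
  rw [Finset.mem_range] at hi
  have := cross (G := G) (S := S) p (l - 1) i (i + 1) (fun t ht => hS t (by omega))
    (fun s hs t ht => hinj s (by omega) t (by omega)) (fun t ht => hadj t (by omega))
    (by omega) (by omega) h1 h2 (by omega)
  rwa [show i + 1 + (l - 1 - (i + 1) + 1) = l by omega] at this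

theorem ore_step {V : Type} {G : SimpleGraph V} {S : Finset V} {l : ℕ} (u v : V)
    (h : HC (G ⊔ edge u v) S l) (hnd : nd G S u + nd G S v + 2 ≤ l) : HC G S l := by
  obtain ⟨hl, f, hS, hinj, hadj, hcl⟩ := h
  by_cases hall : (∀ i, i + 1 < l → G.Adj (f i) (f (i + 1))) ∧ G.Adj (f (l - 1)) (f 0)
  · exact ⟨hl, f, hS, hinj, hall.1, hall.2⟩
  obtain ⟨i0, hi0, hbad⟩ : ∃ i0 < l, ¬ G.Adj (f i0) (f ((i0 + 1) % l)) := by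
    by_contra! hcon
    apply hall
    constructor
    · intro i hi
      have := hcon i (by omega)
      rwa [Nat.mod_eq_of_lt hi] at this
    · have := hcon (l - 1) (by omega)
      rwa [show l - 1 + 1 = l by omega, Nat.mod_self] at this
  obtain ⟨p, pS, pinj, padj, pcl, p1, p0⟩ := rotate hl f hS hinj hadj hcl i0 hi0
  rw [← p1, ← p0] at hbad
  simp only [sup_adj, edge_adj] at pcl padj
  have huv := (pcl.resolve_left hbad).1
  apply ore_path hl p pS pinj
  · intro i hi
    rcases padj i hi with h | ⟨h, -⟩
    · exact h
    exfalso
    have e1 : p i = p (l - 1) → False := fun h => by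
      have := pinj _ (by omega) _ (by omega) h
      omega
    have e2 : p i = p 0 → p (i + 1) = p (l - 1) → False := fun h h' => by
      have := pinj _ (by omega) _ (by omega) h
      have := pinj _ (by omega) _ (by omega) h'
      omega
    rcases huv with ⟨a, b⟩ | ⟨a, b⟩ <;> rcases h with ⟨c, d⟩ | ⟨c, d⟩
    · exact e1 (c.trans a.symm)
    · exact e2 (c.trans b.symm) (d.trans a.symm)
    · exact e2 (c.trans b.symm) (d.trans a.symm)
    · exact e1 (c.trans a.symm)
  · rcases huv with ⟨a, b⟩ | ⟨a, b⟩
    · rw [a, b]; omega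
    · rw [a, b]; omega

theorem bondy {V : Type} {G : SimpleGraph V} {S : Finset V} {c : ℕ} (h : HC G S c)
    (hN : 2 * NN G S < c * (c - 2)) (l : ℕ) (hl : 3 ≤ l) (hlc : l ≤ c) : HC G S l := by
  classical
  obtain ⟨hc, f, hS, hinj, hadj, hcl⟩ := h
  obtain ⟨i0, hi0, hgood⟩ : ∃ i0 < c, nd G S (f i0) + nd G S (f ((i0 + 1) % c)) < c - 2 := by
    by_contra! hcon
    have h1 : ∑ i ∈ Finset.range c, nd G S (f i) ≤ NN G S := by
      rw [← Finset.sum_image (s := Finset.range c) (g := f) (f := nd G S)]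
      · apply Finset.sum_le_sum_of_subset
        intro x hx
        simp only [Finset.mem_image, Finset.mem_range] at hx
        obtain ⟨i, hi, rfl⟩ := hx
        exact hS i hi
      · intro i hi j hj hij
        simp only [Finset.coe_range, Set.mem_Iio] at hi hj
        exact hinj i hi j hj hij
    have h2 : ∑ i ∈ Finset.range c, nd G S (f ((i + 1) % c)) =
        ∑ i ∈ Finset.range c, nd G S (f i) := by
      obtain ⟨m, rfl⟩ : ∃ m, c = m + 1 := ⟨c - 1, by omega⟩
      rw [Finset.sum_range_succ, Finset.sum_range_succ' (fun i => nd G S (f i)), Nat.mod_self]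
      congr 1
      apply Finset.sum_congr rfl
      intro i hi
      rw [Finset.mem_range] at hi
      rw [Nat.mod_eq_of_lt (by omega)]
    have h3 : ∑ i ∈ Finset.range c, (c - 2) ≤
        ∑ i ∈ Finset.range c, (nd G S (f i) + nd G S (f ((i + 1) % c))) :=
      Finset.sum_le_sum (fun i hi => hcon i (Finset.mem_range.1 hi))
    rw [Finset.sum_add_distrib, h2, Finset.sum_const, Finset.card_range, smul_eq_mul] at h3
    omega
  obtain ⟨p, pS, pinj, padj, pcl, p1, p0⟩ := rotate hc f hS hinj hadj hcl i0 hi0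
  rw [← p1, ← p0] at hgood
  obtain ⟨m, rfl⟩ : ∃ m, c = m + 1 := ⟨c - 1, by omega⟩
  rw [Nat.add_sub_cancel] at hgood pcl
  obtain ⟨j, hj, h1, h2⟩ := pigeon (G := G) (S := S) (p 0) (p m) (Finset.Ico 1 m)
    p (fun j => p (if j + (l - 3) < m then j + (l - 3) else j + l - (m + 2)))
    (by intro i hi; rw [Finset.mem_Ico] at hi; exact pS _ (by omega))
    (by intro i hi h; rw [Finset.mem_Ico] at hi; have := pinj _ (by omega) _ (by omega) h; omega)
    (by
      intro i hi j hj h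
      rw [Finset.mem_Ico] at hi hj
      exact pinj _ (by omega) _ (by omega) h)
    (by intro i hi; rw [Finset.mem_Ico] at hi; exact pS _ (by split_ifs <;> omega))
    (by
      intro i hi h
      rw [Finset.mem_Ico] at hi
      have := pinj _ (by split_ifs <;> omega) _ (by omega) h
      split_ifs at this <;> omega)
    (by
      intro i hi j hj h
      rw [Finset.mem_Ico] at hi hj
      have := pinj _ (by split_ifs <;> omega) _ (by split_ifs <;> omega) h
      split_ifs at this <;> omega)
    (by rw [Nat.card_Ico]; omega)
  rw [Finset.mem_Ico] at hj
  split_ifs at h2 with hlt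
  · exact shortcut p m j l (fun t ht => pS t (by omega))
      (fun s hs t ht => pinj s (by omega) t (by omega)) (fun t ht => padj t (by omega))
      hj.1 hl hlt h1 h2 pcl
  · have := cross (G := G) (S := S) p m (j + l - (m + 2)) j (fun t ht => pS t (by omega))
      (fun s hs t ht => pinj s (by omega) t (by omega)) (fun t ht => padj t (by omega))
      (by omega) (by omega) h1 h2 (by omega)
    rwa [show j + l - (m + 2) + 1 + (m - j + 1) = l by omega] at this

open Classical in
theorem nd_erase {V : Type} [DecidableEq V] (G : SimpleGraph V) (S : Finset V) (v w : V)
    (hv : v ∈ S) : nd G S w = nd G (S.erase v) w + (if v ≠ w ∧ ¬ G.Adj w v then 1 else 0) := by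
  classical
  unfold nd
  conv_lhs => rw [← Finset.insert_erase hv]
  rw [Finset.filter_insert]
  split_ifs with h
  · rw [Finset.card_insert_of_notMem (by simp)]
  · simp

theorem NN_erase {V : Type} [DecidableEq V] (G : SimpleGraph V) (S : Finset V) (v : V)
    (hv : v ∈ S) : NN G S = NN G (S.erase v) + 2 * nd G S v := by
  classical
  unfold NN
  rw [← Finset.add_sum_erase S _ hv, Finset.sum_congr rfl (fun w _ => nd_erase G S v w hv),
    Finset.sum_add_distrib, ← Finset.card_filter]
  have : ((S.erase v).filter (fun w => v ≠ w ∧ ¬ G.Adj w v)).card = nd G S v := by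
    unfold nd
    congr 1
    ext w
    simp only [Finset.mem_filter, Finset.mem_erase, G.adj_comm w v]
    grind
  omega

theorem NN_lower {V : Type} (G : SimpleGraph V) (h : ℕ) :
    ∀ (S W : Finset V) (d : ℤ), W ⊆ S → W.card = h → (∀ w ∈ W, d ≤ (nd G S w : ℤ)) →
      2 * (h : ℤ) * d ≤ (NN G S : ℤ) + h * (h - 1) := by
  classical
  induction h with
  | zero => intro S W d _ _ _; simp
  | succ h ih =>
    intro S W d hWS hW hd
    obtain ⟨w, hw⟩ : W.Nonempty := by rw [← Finset.card_pos]; omega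
    have h1 := ih (S.erase w) (W.erase w) (d - 1) (Finset.erase_subset_erase _ hWS)
      (by rw [Finset.card_erase_of_mem hw]; omega)
      (by
        intro x hx
        have h2 := hd x (Finset.mem_of_mem_erase hx)
        have h3 := nd_erase G S w x (hWS hw)
        split_ifs at h3 <;> omega)
    have h2 := NN_erase G S w (hWS hw)
    have h3 := hd w hw
    rw [h2]
    push_cast
    nlinarith

theorem arith (n M h : ℤ) (hM : 0 ≤ M) (h1 : 6 * M + 5 ≤ n) (h2 : (M + 2) * (M + 3) ≤ 2 * n)
    (h3 : M + 1 ≤ h) (h4 : 2 * h ≤ n - 1) :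
    2 * M * (n - M - 1) < 2 * h * (n - 1 - h) - h * (h - 1) := by
  by_cases hc : 3 * (h + M + 1) ≤ 2 * n - 1
  · nlinarith [mul_nonneg (sub_nonneg.2 h3) (sub_nonneg.2 hc)]
  · have key : 8 * M * (n - M - 1) < n ^ 2 - 1 := by
      by_cases hM8 : M ≤ 8
      · interval_cases M <;> nlinarith
      · have : 3 * M + 3 ≤ n - 4 * M := by nlinarith
        nlinarith
    push Not at hc
    nlinarith [mul_nonneg (sub_nonneg.2 h4) (by linarith : 0 ≤ 6 * h + 3 * (n - 1) - 2 * (2 * n - 1))]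

theorem erdos {V : Type} (S : Finset V) (n M : ℕ) (hS : S.card = n) (h1 : 6 * M + 5 ≤ n)
    (h2 : (M + 2) * (M + 3) ≤ 2 * n) (t : ℕ) : ∀ (G : SimpleGraph V), NN G S = t →
    NN G S ≤ 2 * M * (n - M - 1) → (∀ v ∈ S, nd G S v + M + 2 ≤ n) → HC G S n := by
  classical
  induction t using Nat.strong_induction_on with
  | _ t ih =>
  intro G ht hN hd
  by_cases hcl : ∀ u ∈ S, ∀ v ∈ S, u ≠ v → G.Adj u v
  · exact clique_hc S hcl n (by omega) hS.ge
  push Not at hcl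
  obtain ⟨u0, hu0, v0, hv0, huv0, hna0⟩ := hcl
  let P := (S ×ˢ S).filter (fun q => q.1 ≠ q.2 ∧ ¬ G.Adj q.1 q.2)
  obtain ⟨⟨u, v⟩, huv, hmin⟩ := Finset.exists_min_image P (fun q => nd G S q.1 + nd G S q.2)
    ⟨(u0, v0), by simp [P, hu0, hv0, huv0, hna0]⟩
  have hP : ∀ a b, (a, b) ∈ P ↔ a ∈ S ∧ b ∈ S ∧ a ≠ b ∧ ¬ G.Adj a b := by
    intro a b
    simp only [P, Finset.mem_filter, Finset.mem_product]
    tauto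
  wlog hle : nd G S v ≤ nd G S u generalizing u v
  · refine this v u ?_ ?_ (by omega)
    · rw [hP] at huv ⊢
      exact ⟨huv.2.1, huv.1, huv.2.2.1.symm, fun h => huv.2.2.2 h.symm⟩
    · intro q hq
      have := hmin q hq
      simp only at this ⊢
      omega
  have huv' := huv
  rw [hP] at huv
  obtain ⟨hu, hv, hne, hna⟩ := huv
  by_cases hsum : nd G S u + nd G S v + 2 ≤ n
  · apply ore_step u v _ hsum
    have hle' : ∀ w, nd (G ⊔ edge u v) S w ≤ nd G S w := by
      intro w
      unfold nd
      apply Finset.card_le_card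
      intro x hx
      simp only [Finset.mem_filter, sup_adj] at hx ⊢
      tauto
    have hlt : NN (G ⊔ edge u v) S < NN G S := by
      unfold NN
      apply Finset.sum_lt_sum (fun w _ => hle' w)
      refine ⟨u, hu, ?_⟩
      unfold nd
      apply Finset.card_lt_card
      rw [Finset.ssubset_iff_of_subset]
      · refine ⟨v, by simp [hv, hne.symm, hna], by simp [edge_adj, hne]⟩
      · intro x hx
        simp only [Finset.mem_filter, sup_adj] at hx ⊢
        tauto
    exact ih _ (ht ▸ hlt) _ rfl (by omega) (fun w hw => by have := hle' w; have := hd w hw; omega)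
  · exfalso
    have hdu := hd u hu
    obtain ⟨h, hh⟩ : ∃ h, nd G S u + h + 1 = n := ⟨n - 1 - nd G S u, by omega⟩
    have hW : h ≤ (S.filter (fun w => w ≠ v ∧ ¬ G.Adj v w)).card := by
      have : nd G S v = (S.filter (fun w => w ≠ v ∧ ¬ G.Adj v w)).card := by
        unfold nd; congr
      omega
    obtain ⟨W, hWs, hWc⟩ := Finset.exists_subset_card_eq hW
    have hlow := NN_lower G h S W (nd G S u) (hWs.trans (Finset.filter_subset _ _)) hWc (by
      intro w hw
      have := hWs hw
      simp only [Finset.mem_filter] at this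
      have := hmin (w, v) (by
        rw [hP]; exact ⟨this.1, hv, this.2.1, fun h => this.2.2 h.symm⟩)
      simp only at this
      omega)
    have ha := arith n M h (by omega) (by omega) (by exact_mod_cast h2) (by omega) (by omega)
    have hN' : (NN G S : ℤ) ≤ 2 * M * (n - M - 1) := by
      have : (NN G S : ℤ) ≤ ((2 * M * (n - M - 1) : ℕ) : ℤ) := by exact_mod_cast hN
      rw [Nat.sub_sub] at this
      push_cast [Nat.cast_sub (show M + 1 ≤ n by omega)] at this
      linarith
    have hu' : (nd G S u : ℤ) = n - 1 - h := by omega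
    rw [hu'] at hlow
    linarith

/-- `G[S]` is two cliques `{x} ∪ A`, `{x} ∪ B` sharing the vertex `x`, with `|B| = K`. -/
def LS {V : Type} [DecidableEq V] (G : SimpleGraph V) (S : Finset V) (K : ℕ) : Prop :=
  ∃ (x : V) (A B : Finset V), x ∉ A ∧ x ∉ B ∧ Disjoint A B ∧ B.card = K ∧
    S = insert x (A ∪ B) ∧
    ∀ u ∈ S, ∀ w ∈ S, u ≠ w → (G.Adj u w ↔ ¬ ((u ∈ A ∧ w ∈ B) ∨ (u ∈ B ∧ w ∈ A)))

theorem LS_extend {V : Type} [DecidableEq V] (G : SimpleGraph V) (S : Finset V) (K n : ℕ) (v : V)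
    (hv : v ∈ S) (hn : S.card = n) (hKn : K + 4 ≤ n) (h : LS G (S.erase v) K)
    (hN : NN G S ≤ 2 * (K + 1) * (n - K - 2)) :
    (∃ l, n - K ≤ l ∧ HC G S l) ∨ LS G S (K + 1) := by
  classical
  obtain ⟨x, A, B, hxA, hxB, hAB, hB, hS, hadj⟩ := h
  have hcard : A.card + K + 2 = n := by
    have h1 := congrArg Finset.card hS
    rw [Finset.card_erase_of_mem hv, Finset.card_insert_of_notMem (by simp [hxA, hxB]),
      Finset.card_union_of_disjoint hAB, hB] at h1
    omega
  have hmem : ∀ w, w ∈ S.erase v ↔ w = x ∨ w ∈ A ∨ w ∈ B := by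
    intro w; rw [hS]; simp
  have hvx : v ≠ x := fun e => by
    have := (hmem x).2 (Or.inl rfl)
    simp [e] at this
  have hvA : v ∉ A := fun e => by
    have := (hmem v).2 (Or.inr (Or.inl e))
    simp at this
  have hvB : v ∉ B := fun e => by
    have := (hmem v).2 (Or.inr (Or.inr e))
    simp at this
  have hdis := Finset.disjoint_left.1 hAB
  have hndv : nd G S v ≤ A.card := by
    have hA' : ∀ a ∈ A, K ≤ nd G (S.erase v) a := by
      intro a ha
      rw [← hB]
      apply le_nd
      intro b hb
      have hne : a ≠ b := fun e => hdis ha (e ▸ hb)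
      have ha1 := (hmem a).2 (by tauto)
      have hb1 := (hmem b).2 (by tauto)
      refine ⟨hb1, hne.symm, ?_⟩
      rw [hadj a ha1 b hb1 hne]
      tauto
    have hB' : ∀ b ∈ B, A.card ≤ nd G (S.erase v) b := by
      intro b hb
      apply le_nd
      intro a ha
      have hne : a ≠ b := fun e => hdis ha (e ▸ hb)
      have ha1 := (hmem a).2 (by tauto)
      have hb1 := (hmem b).2 (by tauto)
      refine ⟨ha1, hne, ?_⟩
      rw [hadj b hb1 a ha1 hne.symm]
      tauto
    have h1 : ∑ w ∈ A ∪ B, nd G (S.erase v) w ≤ NN G (S.erase v) := by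
      unfold NN
      apply Finset.sum_le_sum_of_subset
      rw [hS]
      exact Finset.subset_insert _ _
    rw [Finset.sum_union hAB] at h1
    have h2 := Finset.card_nsmul_le_sum A _ K hA'
    have h3 := Finset.card_nsmul_le_sum B _ A.card hB'
    rw [smul_eq_mul] at h2 h3
    rw [hB] at h3
    have h4 := NN_erase G S v hv
    rw [show n - K - 2 = A.card by omega] at hN
    nlinarith
  have hQadj : ∀ u ∈ insert x A, ∀ w ∈ insert x A, u ≠ w → G.Adj u w := by
    intro u hu w hw huw
    rw [Finset.mem_insert] at hu hw
    rw [hadj u ((hmem u).2 (by tauto)) w ((hmem w).2 (by tauto)) huw]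
    have := @hdis u
    have := @hdis w
    grind
  have hQc : (insert x A).card = A.card + 1 := Finset.card_insert_of_notMem hxA
  have hsub : S.erase v ⊆ S := Finset.erase_subset _ _
  have hQS : insert x A ⊆ S := by
    intro w hw
    rw [Finset.mem_insert] at hw
    exact hsub ((hmem w).2 (by tauto))
  have hvQ : v ∉ insert x A := by simp [hvx, hvA]
  obtain ⟨a, haQ, hva⟩ : ∃ a ∈ insert x A, G.Adj v a := by
    by_contra! hcon
    have : (insert x A).card ≤ nd G S v := by
      apply le_nd
      intro w hw
      exact ⟨hQS hw, fun e => hvQ (e ▸ hw), hcon w hw⟩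
    omega
  by_cases hb : ∃ b ∈ insert x A, b ≠ a ∧ G.Adj v b
  · obtain ⟨b, hbQ, hba, hvb⟩ := hb
    left
    exact ⟨_, by rw [hQc]; omega,
      clique_add S (insert x A) v a b hv hQS hQadj hvQ haQ hbQ hba.symm hva hvb⟩
  push Not at hb
  have hM : (insert x A).erase a = S.filter (fun w => w ≠ v ∧ ¬ G.Adj v w) := by
    apply Finset.eq_of_subset_of_card_le
    · intro w hw
      rw [Finset.mem_erase] at hw
      rw [Finset.mem_filter]
      exact ⟨hQS hw.2, fun e => hvQ (e ▸ hw.2), hb w hw.2 hw.1⟩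
    · rw [Finset.card_erase_of_mem haQ, hQc]
      have : nd G S v = (S.filter (fun w => w ≠ v ∧ ¬ G.Adj v w)).card := by
        unfold nd; congr
      omega
  have hvadj : ∀ w ∈ S, w ≠ v → (G.Adj v w ↔ w ∉ (insert x A).erase a) := by
    intro w hw hwv
    rw [hM, Finset.mem_filter]
    tauto
  have hvBadj : ∀ b ∈ B, G.Adj v b := by
    intro b hb
    rw [hvadj b (hsub ((hmem b).2 (by tauto))) (fun e => hvB (e ▸ hb))]
    have := @hdis b
    grind
  by_cases hcase : a ≠ x ∧ B.Nonempty
  · obtain ⟨hax, u, hu⟩ := hcase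
    left
    refine ⟨(insert x A).card + 2, by rw [hQc]; omega, ?_⟩
    refine clique_add2 S (insert x A) v u a x hv (hsub ((hmem u).2 (by tauto)))
      (hvBadj u hu).symm hQS hQadj hvQ ?_ haQ (by simp) hax hva ?_
    · have := @hdis u
      grind
    · rw [hadj u ((hmem u).2 (by tauto)) x ((hmem x).2 (by tauto)) (by grind)]
      tauto
  · right
    have hcase' : a = x ∨ B = ∅ := by
      rw [← Finset.not_nonempty_iff_eq_empty]
      tauto
    have hmemS : ∀ w, w ∈ S ↔ w = v ∨ w ∈ insert x A ∨ w ∈ B := by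
      intro w
      rw [← Finset.insert_erase hv, Finset.mem_insert, hmem, Finset.mem_insert]
      tauto
    have haB : a ∉ B := by
      intro h
      have := @hdis a
      grind
    have hdisQ : ∀ w ∈ insert x A, w ∉ B := by
      intro w hw h
      have := @hdis w
      grind
    have hav : a ≠ v := fun e => hvQ (e ▸ haQ)
    refine ⟨a, (insert x A).erase a, insert v B, by simp, by simp [hav, haB], ?_, ?_, ?_, ?_⟩
    · rw [Finset.disjoint_left]
      intro w hw hw'
      rw [Finset.mem_erase] at hw
      rw [Finset.mem_insert] at hw'
      rcases hw' with rfl | hw'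
      · exact hvQ hw.2
      · exact hdisQ w hw.2 hw'
    · rw [Finset.card_insert_of_notMem hvB, hB]
    · ext w
      rw [hmemS, Finset.mem_insert (b := a), Finset.mem_union, Finset.mem_insert (b := v), Finset.mem_erase]
      by_cases hwa : w = a
      · simp [hwa, haQ]
      · simp only [hwa, false_or, ne_eq, not_false_eq_true, true_and]
        clear * -
        tauto
    · intro u hu w hw huw
      by_cases huv : u = v
      · subst huv
        rw [hvadj w hw huw.symm]
        have : u ∉ (insert x A).erase a := fun h => hvQ (Finset.mem_of_mem_erase h)
        simp only [Finset.mem_insert_self, true_and, this, false_and, false_or]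
      by_cases hwv : w = v
      · subst hwv
        rw [G.adj_comm, hvadj u hu huw]
        have : w ∉ (insert x A).erase a := fun h => hvQ (Finset.mem_of_mem_erase h)
        simp only [Finset.mem_insert_self, and_true, this, and_false, or_false]
      rw [hadj u (Finset.mem_erase.2 ⟨huv, hu⟩) w (Finset.mem_erase.2 ⟨hwv, hw⟩) huw]
      rcases hcase' with rfl | rfl
      · rw [Finset.erase_insert hxA]
        simp [huv, hwv]
      · simp [huv, hwv]

theorem main_ind {V : Type} [DecidableEq V] (G : SimpleGraph V) (K : ℕ) :
    ∀ (S : Finset V) (n : ℕ), S.card = n → 6 * K + 5 ≤ n → (K + 2) * (K + 3) ≤ 2 * n →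
      NN G S ≤ 2 * K * (n - K - 1) → (∃ l, n - K + 1 ≤ l ∧ HC G S l) ∨ LS G S K := by
  induction K with
  | zero =>
    intro S n hS h1 h2 hN
    right
    obtain ⟨x, hx⟩ : S.Nonempty := by rw [← Finset.card_pos]; omega
    refine ⟨x, S.erase x, ∅, by simp, by simp, by simp, by simp, ?_, ?_⟩
    · rw [Finset.union_empty, Finset.insert_erase hx]
    · intro u hu w hw huw
      simp only [Finset.notMem_empty, and_false, false_and, or_false, not_false_eq_true, iff_true]
      have h0 : NN G S = 0 := by simpa using hN
      unfold NN at h0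
      rw [Finset.sum_eq_zero_iff] at h0
      have := h0 u hu
      by_contra hc
      have := le_nd G S {w} u (by simp [hw, huw.symm, hc])
      simp at this
      omega
  | succ K ih =>
    intro S n hS h1 h2 hN
    by_cases hd : ∀ v ∈ S, nd G S v + (K + 1) + 2 ≤ n
    · left
      exact ⟨n, by omega, erdos S n (K + 1) hS h1 h2 _ G rfl hN hd⟩
    push Not at hd
    obtain ⟨v, hv, hdv⟩ := hd
    have hE := NN_erase G S v hv
    obtain ⟨m, rfl⟩ : ∃ m, n = m + K + 2 := ⟨n - K - 2, by omega⟩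
    rw [show m + K + 2 - (K + 1) - 1 = m by omega] at hN
    have := ih (S.erase v) (m + K + 1) (by rw [Finset.card_erase_of_mem hv]; omega) (by omega)
      (by nlinarith)
      (by rw [show m + K + 1 - K - 1 = m by omega]; nlinarith)
    rcases this with ⟨l, hl, hc⟩ | h
    · left
      refine ⟨l, by omega, ?_⟩
      obtain ⟨h3, f, hfS, hrest⟩ := hc
      exact ⟨h3, f, fun i hi => Finset.mem_of_mem_erase (hfS i hi), hrest⟩
    · rcases LS_extend G S K (m + K + 2) v hv hS (by omega) h
        (by rw [show m + K + 2 - K - 2 = m by omega]; exact hN) with ⟨l, hl, hc⟩ | h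
      · exact Or.inl ⟨l, by omega, hc⟩
      · exact Or.inr h

theorem LS_iso {n K : ℕ} (hK : K + 1 ≤ n) (G : SimpleGraph (Fin n)) (h : LS G Finset.univ K) :
    Nonempty (G ≃g Lgraph n K) := by
  obtain ⟨x, A, B, hxA, hxB, hAB, hB, hS, hadj⟩ := h
  have hdis := Finset.disjoint_left.1 hAB
  have hcard : A.card + K + 1 = n := by
    have h1 := congrArg Finset.card hS
    rw [Finset.card_insert_of_notMem (by simp [hxA, hxB]),
      Finset.card_union_of_disjoint hAB, hB, Finset.card_univ, Fintype.card_fin] at h1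
    omega
  let L : List (Fin n) := x :: (A.toList ++ B.toList)
  have hL : L.length = n := by simp [L, hB]; omega
  have hnd : L.Nodup := by
    simp only [L, List.nodup_cons, List.mem_append, Finset.mem_toList, List.nodup_append,
      Finset.nodup_toList, true_and]
    refine ⟨by tauto, ?_⟩
    intro a ha b hb e
    exact hdis ha (e ▸ hb)
  let e : Fin n → Fin n := fun i => L[i.val]'(by rw [hL]; exact i.2)
  have einj : Function.Injective e := by
    intro i j hij
    exact Fin.ext ((List.Nodup.getElem_inj_iff hnd).1 hij)
  have eM : ∀ i, (i.val = 0 ∧ e i = x) ∨ (i.val ≠ 0 ∧ i.val < n - K ∧ e i ∈ A) ∨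
      (n - K ≤ i.val ∧ e i ∈ B) := by
    rintro ⟨i, hi⟩
    rcases i with _ | t
    · left
      exact ⟨rfl, rfl⟩
    right
    have he : e ⟨t + 1, hi⟩ = (A.toList ++ B.toList)[t]'(by simp [hB]; omega) := rfl
    by_cases ht : t < A.card
    · left
      refine ⟨by simp, by simp only; omega, ?_⟩
      rw [he, List.getElem_append_left (by simpa using ht)]
      exact Finset.mem_toList.1 (List.getElem_mem _)
    · right
      refine ⟨by simp only; omega, ?_⟩
      rw [he, List.getElem_append_right (by simpa using ht)]
      exact Finset.mem_toList.1 (List.getElem_mem _)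
  have eA : ∀ i, e i ∈ A ↔ (i.val ≠ 0 ∧ i.val < n - K) := by
    intro i
    rcases eM i with ⟨h1, h2⟩ | ⟨h1, h2, h3⟩ | ⟨h1, h2⟩
    · simp [h1, h2, hxA]
    · simp only [h3, true_iff]
      omega
    · have : e i ∉ A := fun h => hdis h h2
      simp only [this, false_iff]
      omega
  have eB : ∀ i, e i ∈ B ↔ (n - K ≤ i.val) := by
    intro i
    rcases eM i with ⟨h1, h2⟩ | ⟨h1, h2, h3⟩ | ⟨h1, h2⟩
    · rw [h2]
      simp only [hxB, false_iff]
      omega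
    · have : e i ∉ B := hdis h3
      simp only [this, false_iff]
      omega
    · simp only [h2, true_iff]
      omega
  let E : Fin n ≃ Fin n := Equiv.ofBijective e (Finite.injective_iff_bijective.1 einj)
  refine ⟨(RelIso.symm ⟨E, ?_⟩ : G ≃g Lgraph n K)⟩
  intro i j
  change G.Adj (e i) (e j) ↔ (Lgraph n K).Adj i j
  by_cases hij : i = j
  · subst hij; simp
  rw [hadj _ (Finset.mem_univ _) _ (Finset.mem_univ _) (fun h => hij (einj h)), eA, eB, eA, eB]
  simp only [Lgraph, SimpleGraph.fromRel_adj]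
  have : i.val ≠ j.val := fun h => hij (Fin.ext h)
  simp only [ne_eq, hij, not_false_eq_true, true_and]
  omega

theorem NN_univ {n : ℕ} (G : SimpleGraph (Fin n)) :
    NN G Finset.univ + 2 * edgeCount G = n * (n - 1) := by
  classical
  have h1 : ∀ v, nd G Finset.univ v + G.degree v = n - 1 := by
    intro v
    have : nd G Finset.univ v = Gᶜ.degree v := by
      unfold nd
      rw [← SimpleGraph.card_neighborFinset_eq_degree]
      congr 1
      ext w
      simp [SimpleGraph.compl_adj, eq_comm]
    rw [this, SimpleGraph.degree_compl, Fintype.card_fin]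
    have := G.degree_lt_card_verts v
    rw [Fintype.card_fin] at this
    omega
  have h2 : edgeCount G = G.edgeFinset.card := by
    unfold edgeCount
    rw [Nat.card_eq_fintype_card, SimpleGraph.edgeFinset_card]
  rw [h2, ← SimpleGraph.sum_degrees_eq_twice_card_edges]
  unfold NN
  rw [← Finset.sum_add_distrib, Finset.sum_congr rfl (fun v _ => h1 v)]
  simp

/-- Refined Woodall theorem (Theorem 2.1). -/
theorem woodall_refined (k n : ℕ) (G : SimpleGraph (Fin n))
    (hn1 : 6 * k + 11 ≤ n) (hn2 : (k + 3) * (k + 4) / 2 ≤ n)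
    (he : (n - k - 1).choose 2 + (k + 2).choose 2 ≤ edgeCount G) :
    WeaklyPancyclic3 G ∧
      ((∀ l : ℕ, 3 ≤ l → l ≤ n - k → HasCycleLen G l) ∨
        Nonempty (G ≃g Lgraph n (k + 1))) := by
  have hNu := NN_univ G
  obtain ⟨m, rfl⟩ : ∃ m, n = m + k + 2 := ⟨n - k - 2, by omega⟩
  have hN : NN G Finset.univ ≤ 2 * (k + 1) * m := by
    have e1 : 2 * (m + 1).choose 2 = (m + 1) * m := by
      rw [Nat.choose_two_right, Nat.add_sub_cancel]
      exact Nat.mul_div_cancel' (by rw [mul_comm]; exact (Nat.even_mul_succ_self m).two_dvd)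
    have e2 : 2 * (k + 2).choose 2 = (k + 2) * (k + 1) := by
      rw [Nat.choose_two_right, show k + 2 - 1 = k + 1 by omega]
      exact Nat.mul_div_cancel'
        (by rw [mul_comm]; exact (Nat.even_mul_succ_self (k + 1)).two_dvd)
    rw [show m + k + 2 - k - 1 = m + 1 by omega] at he
    rw [show m + k + 2 - 1 = m + k + 1 by omega] at hNu
    nlinarith
  have hfin : ∀ l, HasCycleLen G l → l ≤ m + k + 2 := by
    intro l hl
    obtain ⟨-, f, -, hinj, -⟩ := hl.hc
    have := Finset.card_le_card_of_injOn (s := Finset.range l) (t := Finset.univ) f (by simp)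
      (by
        intro i hi j hj hij
        simp only [Finset.coe_range, Set.mem_Iio] at hi hj
        exact hinj i hi j hj hij)
    simpa using this
  have hbdd : BddAbove {l | HasCycleLen G l} := ⟨m + k + 2, fun l hl => hfin l hl⟩
  by_cases hc : m + 2 ≤ circumference G
  · have hne : {l | HasCycleLen G l}.Nonempty := by
      by_contra h
      rw [Set.not_nonempty_iff_eq_empty] at h
      unfold circumference at hc
      rw [h] at hc
      simp at hc
    have hmem : HasCycleLen G (circumference G) := Nat.sSup_mem hne hbdd
    have hall : ∀ l, 3 ≤ l → l ≤ circumference G → HasCycleLen G l := by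
      intro l hl hlc
      refine (bondy hmem.hc ?_ l hl hlc).hasCycleLen
      have h1 : (m + 2) * m ≤ circumference G * (circumference G - 2) :=
        Nat.mul_le_mul hc (by omega)
      have h2 : 4 * (k + 1) * m < (m + 2) * m := by
        apply Nat.mul_lt_mul_of_pos_right <;> omega
      linarith
    exact ⟨⟨hall 3 le_rfl (by omega), hall⟩, Or.inl fun l hl hl' => hall l hl (by omega)⟩
  · have hLS : LS G Finset.univ (k + 1) := by
      have h2 : (k + 1 + 2) * (k + 1 + 3) ≤ 2 * (m + k + 2) := by
        have h3 : 2 * ((k + 3) * (k + 4) / 2) = (k + 3) * (k + 4) :=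
          Nat.mul_div_cancel' (Nat.even_mul_succ_self (k + 3)).two_dvd
        have h4 : (k + 1 + 2) * (k + 1 + 3) = (k + 3) * (k + 4) := by ring
        omega
      rcases main_ind G (k + 1) Finset.univ (m + k + 2) (by simp) (by omega) h2
        (by rw [show m + k + 2 - (k + 1) - 1 = m by omega]; exact hN) with ⟨l, hl, h⟩ | h
      · exfalso
        have : l ≤ circumference G := le_csSup hbdd h.hasCycleLen
        omega
      · exact h
    have hcyc : ∀ l, 3 ≤ l → l ≤ m + 1 → HasCycleLen G l := by
      obtain ⟨x, A, B, hxA, hxB, hAB, hB, hS, hadj⟩ := hLS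
      have hdis := Finset.disjoint_left.1 hAB
      have hcard : A.card = m := by
        have h1 := congrArg Finset.card hS
        rw [Finset.card_insert_of_notMem (by simp [hxA, hxB]),
          Finset.card_union_of_disjoint hAB, hB, Finset.card_univ, Fintype.card_fin] at h1
        omega
      intro l hl hlm
      refine (clique_hc (insert x A) ?_ l hl ?_).hasCycleLen
      · intro u hu w hw huw
        rw [hadj u (Finset.mem_univ _) w (Finset.mem_univ _) huw]
        have := @hdis u
        have := @hdis w
        grind
      · rw [Finset.card_insert_of_notMem hxA]
        omega
    exact ⟨⟨hcyc 3 le_rfl (by omega), fun l hl hl' => hcyc l hl (by omega)⟩,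
      Or.inr (LS_iso (by omega) G hLS)⟩
end

section
/- Let k ≥ 0 be an integer and let G be a simple graph of order n ≥ 2k+5. If e(G) ≥ C(n−k−1, 2) + C(k+2, 2), then G is weakly pancyclic with girth 3, i.e. G contains a triangle and a cycle of every length ℓ with 3 ≤ ℓ ≤ c(G), where c(G) is the circumference of G. -/
open SimpleGraph

namespace WP
open scoped Classical
variable {V : Type} {G : SimpleGraph V}

/-- `g 0, …, g (p-1)` is a path. -/
def PathOn (G : SimpleGraph V) (g : ℕ → V) (p : ℕ) : Prop :=
  (∀ i j, i < p → j < p → g i = g j → i = j) ∧ ∀ i, i + 1 < p → G.Adj (g i) (g (i + 1))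

/-- `f 0, …, f (l-1)` is a cycle. -/
def CycOn (G : SimpleGraph V) (f : ℕ → V) (l : ℕ) : Prop :=
  PathOn G f l ∧ 3 ≤ l ∧ G.Adj (f (l - 1)) (f 0)

lemma exists_walk (f : ℕ → V) (k : ℕ) (h : ∀ i, i < k → G.Adj (f i) (f (i + 1))) :
    ∃ p : G.Walk (f 0) (f k), p.length = k ∧ p.support = (List.range (k + 1)).map f ∧
      p.edges = (List.range k).map (fun i => s(f i, f (i + 1))) := by
  induction k with
  | zero => exact ⟨Walk.nil, by simp⟩
  | succ k ih =>
    obtain ⟨p, h1, h2, h3⟩ := ih (fun i hi => h i (by omega))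
    refine ⟨p.concat (h k (by omega)), ?_, ?_, ?_⟩
    · simp [h1]
    · rw [Walk.support_concat, h2, List.range_succ (n := k + 1)]; simp
    · rw [Walk.edges_concat, h3, List.range_succ (n := k)]; simp

lemma CycOn.hasCycleLen {f : ℕ → V} {l : ℕ} (h : CycOn G f l) : HasCycleLen G l := by
  obtain ⟨⟨hinj, hadj⟩, h3, hcl⟩ := h
  obtain ⟨p, h1, h2, h4⟩ := exists_walk (G := G) f (l - 1) (fun i hi => hadj i (by omega))
  refine ⟨f (l - 1), Walk.cons hcl p, ?_, by simp [h1]; omega⟩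
  rw [Walk.cons_isCycle_iff]
  constructor
  · rw [Walk.isPath_def, h2]
    refine List.Nodup.map_on ?_ List.nodup_range
    intro x hx y hy hxy
    simp at hx hy
    exact hinj x y (by omega) (by omega) hxy
  · rw [h4]
    simp only [List.mem_map, List.mem_range, not_exists, not_and]
    intro i hi heq
    rw [Sym2.eq_iff] at heq
    rcases heq with ⟨ha, hb⟩ | ⟨ha, hb⟩
    · have := hinj _ _ (by omega) (by omega) ha; omega
    · have := hinj _ _ (by omega) (by omega) ha
      have := hinj _ _ (by omega) (by omega) hb
      omega

lemma exists_cycOn {l : ℕ} (h : HasCycleLen G l) : ∃ f, CycOn G f l := by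
  obtain ⟨v, c, hc, rfl⟩ := h
  have h3 := hc.three_le_length
  refine ⟨c.getVert, ⟨?_, ?_⟩, h3, ?_⟩
  · intro i j hi hj hij
    have := hc.getVert_injOn' (x₁ := i) (x₂ := j)
    exact this (by simp; omega) (by simp; omega) hij
  · intro i hi
    exact c.adj_getVert_succ (by omega)
  · have := c.adj_getVert_succ (i := c.length - 1) (by omega)
    rw [Nat.sub_add_cancel (by omega)] at this
    simpa using this

/-- Bondy, first type. -/
lemma bondy1 {f : ℕ → V} {m l k : ℕ} (h : CycOn G f m) (hl : 3 ≤ l) (hlm : l < m)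
    (hk : 2 ≤ k) (hk2 : k + l - 3 < m) (h1 : G.Adj (f 1) (f k))
    (h0 : G.Adj (f 0) (f (k + l - 3))) : HasCycleLen G l := by
  obtain ⟨⟨hinj, hadj⟩, h3, hcl⟩ := h
  apply CycOn.hasCycleLen
    (f := fun i => f (if i = 0 then 1 else if i = l - 1 then 0 else k + i - 1))
  refine ⟨⟨?_, ?_⟩, hl, ?_⟩
  · intro i j hi hj hij
    have := hinj _ _ (by split_ifs <;> omega) (by split_ifs <;> omega) hij
    split_ifs at this <;> omega
  · intro i hi
    by_cases hi0 : i = 0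
    · subst hi0
      have : 1 ≠ l - 1 := by omega
      simpa [this] using h1
    · by_cases hi1 : i + 1 = l - 1
      · have e1 : i ≠ l - 1 := by omega
        have e2 : k + i - 1 = k + l - 3 := by omega
        simp only [hi0, hi1, e1, e2, if_true, if_false, show l - 1 ≠ 0 by omega]
        exact h0.symm
      · have e1 : i ≠ l - 1 := by omega
        simp only [hi0, hi1, e1, if_false, show i + 1 ≠ 0 by omega]
        have := hadj (k + i - 1) (by omega)
        rwa [show k + i - 1 + 1 = k + (i + 1) - 1 by omega] at this
  · simp only [if_true, show l - 1 ≠ 0 by omega, if_false]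
    exact hadj 0 (by omega)

/-- Bondy, second type. -/
lemma bondy2 {f : ℕ → V} {m l k : ℕ} (h : CycOn G f m) (hl : 3 ≤ l) (hlm : l < m)
    (hk : 2 ≤ k) (hk2 : k + 2 ≤ l) (h1 : G.Adj (f 1) (f (k + m + 1 - l)))
    (h0 : G.Adj (f 0) (f k)) : HasCycleLen G l := by
  obtain ⟨⟨hinj, hadj⟩, h3, hcl⟩ := h
  apply CycOn.hasCycleLen
    (f := fun i => f (if i = 0 then 0 else if i ≤ k then k + 1 - i else i + m - l))
  refine ⟨⟨?_, ?_⟩, hl, ?_⟩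
  · intro i j hi hj hij
    have := hinj _ _ (by split_ifs <;> omega) (by split_ifs <;> omega) hij
    split_ifs at this <;> omega
  · intro i hi
    by_cases hi0 : i = 0
    · subst hi0
      simpa [show 1 ≤ k by omega] using h0
    · simp only [hi0, if_false, show i + 1 ≠ 0 by omega]
      by_cases hi1 : i + 1 ≤ k
      · simp only [hi1, show i ≤ k by omega, if_true]
        have := hadj (k - i) (by omega)
        rw [show k - i + 1 = k + 1 - i by omega] at this
        rw [show k + 1 - (i + 1) = k - i by omega]
        exact this.symm
      · by_cases hi2 : i = k
        · subst hi2
          simp only [hi1, le_refl, if_true, if_false]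
          rw [show i + 1 - i = 1 by omega, show i + 1 + m - l = i + m + 1 - l by omega]
          exact h1
        · simp only [hi1, show ¬ i ≤ k by omega, if_false]
          have := hadj (i + m - l) (by omega)
          rwa [show i + m - l + 1 = i + 1 + m - l by omega] at this
  · simp only [if_true, show l - 1 ≠ 0 by omega, show ¬ l - 1 ≤ k by omega, if_false]
    rw [show l - 1 + m - l = m - 1 by omega]
    exact hcl

/-- Replacing an arc of a cycle by an outside path. -/
lemma attach {f g : ℕ → V} {c p j : ℕ} (h : CycOn G f c) (hg : PathOn G g p)
    (hdisj : ∀ i t, i < c → t < p → f i ≠ g t) (hp : 1 ≤ p) (hj : 1 ≤ j) (hjc : j < c)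
    (hjp : j ≤ p) (h0 : G.Adj (g 0) (f 0)) (h1 : G.Adj (g (p - 1)) (f j)) :
    HasCycleLen G (c - j + 1 + p) := by
  obtain ⟨⟨hinj, hadj⟩, h3, hcl⟩ := h
  obtain ⟨ginj, gadj⟩ := hg
  apply CycOn.hasCycleLen
    (f := fun i => if i < c - j then f (j + i) else if i = c - j then f 0 else g (i - (c - j) - 1))
  refine ⟨⟨?_, ?_⟩, by omega, ?_⟩
  · intro i t hi ht hit
    dsimp only at hit
    split_ifs at hit
    · have := hinj _ _ (by omega) (by omega) hit; omega
    · have := hinj _ _ (by omega) (by omega) hit; omega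
    · exact absurd hit (hdisj _ _ (by omega) (by omega))
    · have := hinj _ _ (by omega) (by omega) hit; omega
    · omega
    · exact absurd hit (hdisj _ _ (by omega) (by omega))
    · exact absurd hit.symm (hdisj _ _ (by omega) (by omega))
    · exact absurd hit.symm (hdisj _ _ (by omega) (by omega))
    · have := ginj _ _ (by omega) (by omega) hit; omega
  · intro i hi
    dsimp only
    rcases lt_trichotomy (i + 1) (c - j) with hlt | heq | hgt
    · rw [if_pos (by omega), if_pos hlt]
      exact hadj (j + i) (by omega)
    · rw [if_pos (by omega), if_neg (by omega), if_pos heq, show j + i = c - 1 by omega]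
      exact hcl
    · by_cases hi2 : i = c - j
      · rw [if_neg (by omega), if_pos hi2, if_neg (by omega), if_neg (by omega),
          show i + 1 - (c - j) - 1 = 0 by omega]
        exact h0.symm
      · rw [if_neg (by omega), if_neg hi2, if_neg (by omega), if_neg (by omega)]
        have := gadj (i - (c - j) - 1) (by omega)
        rwa [show i - (c - j) - 1 + 1 = i + 1 - (c - j) - 1 by omega] at this
  · dsimp only
    rw [if_neg (by omega), if_neg (by omega), if_pos (by omega),
      show c - j + 1 + p - 1 - (c - j) - 1 = p - 1 by omega]
    exact h1

/-- Crossing chords at the ends of a path close it to a cycle. -/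
lemma crossing {g : ℕ → V} {p i : ℕ} (hg : PathOn G g p) (hp : 3 ≤ p) (hi : i + 1 < p)
    (h0 : G.Adj (g 0) (g (i + 1))) (h1 : G.Adj (g i) (g (p - 1))) : HasCycleLen G p := by
  obtain ⟨ginj, gadj⟩ := hg
  apply CycOn.hasCycleLen (f := fun t => g (if t ≤ i then t else p + i - t))
  refine ⟨⟨?_, ?_⟩, hp, ?_⟩
  · intro s t hs ht hst
    have := ginj _ _ (by split_ifs <;> omega) (by split_ifs <;> omega) hst
    split_ifs at this <;> omega
  · intro t ht
    dsimp only
    rcases lt_trichotomy t i with hlt | heq | hgt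
    · rw [if_pos (by omega), if_pos (by omega)]; exact gadj t ht
    · subst heq
      rw [if_pos le_rfl, if_neg (by omega), show p + t - (t + 1) = p - 1 by omega]
      exact h1
    · rw [if_neg (by omega), if_neg (by omega)]
      have := gadj (p + i - (t + 1)) (by omega)
      rw [show p + i - (t + 1) + 1 = p + i - t by omega] at this
      exact this.symm
  · dsimp only
    rw [if_neg (by omega), if_pos (by omega), show p + i - (p - 1) = i + 1 by omega]
    exact h0.symm

lemma PathOn.reverse {g : ℕ → V} {p : ℕ} (hg : PathOn G g p) :
    PathOn G (fun i => g (p - 1 - i)) p := by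
  obtain ⟨ginj, gadj⟩ := hg
  refine ⟨fun i j hi hj hij => ?_, fun i hi => ?_⟩
  · have := ginj _ _ (by omega) (by omega) hij; omega
  · have := gadj (p - 1 - (i + 1)) (by omega)
    rw [show p - 1 - (i + 1) + 1 = p - 1 - i by omega] at this
    exact this.symm

/-- A cycle indexed by `ZMod c`. -/
def CycZ (G : SimpleGraph V) {c : ℕ} (F : ZMod c → V) : Prop :=
  Function.Injective F ∧ ∀ z, G.Adj (F z) (F (z + 1))

lemma CycOn.cycZ {f : ℕ → V} {c : ℕ} (h : CycOn G f c) : CycZ G (fun z : ZMod c => f z.val) := by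
  obtain ⟨⟨hinj, hadj⟩, h3, hcl⟩ := h
  have : NeZero c := ⟨by omega⟩
  have : Fact (1 < c) := ⟨by omega⟩
  constructor
  · intro x y hxy
    exact ZMod.val_injective c (hinj _ _ (ZMod.val_lt x) (ZMod.val_lt y) hxy)
  · intro z
    dsimp only
    have hz := ZMod.val_lt z
    by_cases h1 : z.val + 1 < c
    · rw [ZMod.val_add_of_lt (by rwa [ZMod.val_one])]
      rw [ZMod.val_one]
      exact hadj _ h1
    · have h2 : (z + 1).val = 0 := by
        rw [ZMod.val_add, ZMod.val_one, show z.val + 1 = c by omega, Nat.mod_self]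
      rw [h2, show z.val = c - 1 by omega]
      exact hcl

lemma CycZ.rot {c : ℕ} {F : ZMod c → V} (hF : CycZ G F) (hc : 3 ≤ c) (z : ZMod c) :
    CycOn G (fun i => F (z + (i : ZMod c))) c := by
  refine ⟨⟨fun i j hi hj hij => ?_, fun i hi => ?_⟩, hc, ?_⟩
  · have h := add_left_cancel (hF.1 hij)
    rw [ZMod.natCast_eq_natCast_iff'] at h
    rwa [Nat.mod_eq_of_lt hi, Nat.mod_eq_of_lt hj] at h
  · have := hF.2 (z + i)
    simpa [add_assoc] using this
  · have := hF.2 (z + (c - 1 : ℕ))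
    have e : z + ((c - 1 : ℕ) : ZMod c) + 1 = z := by
      rw [Nat.cast_sub (by omega)]; simp
    rw [e] at this
    simpa using this

/-- The trivial interval Cauchy–Davenport bound in `ZMod c`. -/
lemma cd {c : ℕ} [NeZero c] (A : Finset (ZMod c)) (hA : A.Nonempty) (q : ℕ) :
    (∀ z : ZMod c, ∃ j, 1 ≤ j ∧ j ≤ q + 1 ∧ z - (j : ZMod c) ∈ A) ∨
    A.card + q ≤ (Finset.univ.filter
      (fun z : ZMod c => ∃ j, 1 ≤ j ∧ j ≤ q + 1 ∧ z - (j : ZMod c) ∈ A)).card := by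
  induction q with
  | zero =>
    right
    rw [add_zero, ← Finset.card_image_of_injective A (add_left_injective (1 : ZMod c))]
    apply Finset.card_le_card
    intro z hz
    simp only [Finset.mem_image] at hz
    obtain ⟨a, ha, rfl⟩ := hz
    simp only [Finset.mem_filter, Finset.mem_univ, true_and]
    exact ⟨1, le_rfl, by omega, by simpa using ha⟩
  | succ q ih =>
    rcases ih with h | h
    · left
      intro z
      obtain ⟨j, h1, h2, h3⟩ := h z
      exact ⟨j, h1, by omega, h3⟩
    · set U := Finset.univ.filter
        (fun z : ZMod c => ∃ j, 1 ≤ j ∧ j ≤ q + 1 ∧ z - (j : ZMod c) ∈ A) with hU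
      by_cases hcl : ∀ z ∈ U, z + 1 ∈ U
      · left
        have hne : U.Nonempty := by
          rw [← Finset.card_pos]; have := hA.card_pos; omega
        obtain ⟨z0, hz0⟩ := hne
        have hall : ∀ t : ℕ, z0 + (t : ZMod c) ∈ U := by
          intro t
          induction t with
          | zero => simpa using hz0
          | succ t iht =>
            have := hcl _ iht
            simpa [add_assoc] using this
        intro z
        have h2 := hall (z - z0).val
        rw [ZMod.natCast_zmod_val, add_sub_cancel] at h2
        simp only [hU, Finset.mem_filter, Finset.mem_univ, true_and] at h2
        obtain ⟨j, h1, h2, h3⟩ := h2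
        exact ⟨j, h1, by omega, h3⟩
      · right
        push Not at hcl
        obtain ⟨z, hz, hz1⟩ := hcl
        have : (insert (z + 1) U).card ≤ (Finset.univ.filter
          (fun z : ZMod c => ∃ j, 1 ≤ j ∧ j ≤ q + 1 + 1 ∧ z - (j : ZMod c) ∈ A)).card := by
          apply Finset.card_le_card
          intro y hy
          simp only [Finset.mem_filter, Finset.mem_univ, true_and]
          rcases Finset.mem_insert.1 hy with rfl | hy
          · simp only [hU, Finset.mem_filter, Finset.mem_univ, true_and] at hz
            obtain ⟨j, h1, h2, h3⟩ := hz
            refine ⟨j + 1, by omega, by omega, ?_⟩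
            push_cast
            rwa [add_sub_add_right_eq_sub]
          · simp only [hU, Finset.mem_filter, Finset.mem_univ, true_and] at hy
            obtain ⟨j, h1, h2, h3⟩ := hy
            exact ⟨j, h1, by omega, h3⟩
        rw [Finset.card_insert_of_notMem hz1] at this
        omega


/-- Degree of `v` into `S`. -/
noncomputable def dg (G : SimpleGraph V) (S : Finset V) (v : V) : ℕ := (S.filter (G.Adj v)).card

/-- Degree sum of the graph induced on `S`. -/
noncomputable def DS (G : SimpleGraph V) (S : Finset V) : ℕ := ∑ v ∈ S, dg G S v

/-- `S` spans more than `|S|^2/4` edges. -/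
def Big (G : SimpleGraph V) (S : Finset V) : Prop := 2 * (S.card ^ 2 / 4) + 2 ≤ DS G S

lemma DS_erase (S : Finset V) (v : V) (hv : v ∈ S) :
    DS G (S.erase v) + 2 * dg G S v = DS G S := by
  have h1 : ∀ w ∈ S.erase v, dg G S w = dg G (S.erase v) w + if G.Adj v w then 1 else 0 := by
    intro w hw
    unfold dg
    rw [Finset.filter_erase]
    by_cases h : G.Adj v w
    · have hm : v ∈ S.filter (G.Adj w) := by simp [hv, h.symm]
      rw [if_pos h, Finset.card_erase_add_one hm]
    · have hm : v ∉ S.filter (G.Adj w) := by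
        simp only [Finset.mem_filter, not_and]; exact fun _ h' => h h'.symm
      rw [if_neg h, Finset.erase_eq_of_notMem hm, add_zero]
  have h2 : dg G S v = ∑ w ∈ S.erase v, if G.Adj v w then 1 else 0 := by
    rw [← Finset.card_filter, Finset.filter_erase, Finset.erase_eq_of_notMem (by simp)]
    rfl
  unfold DS
  rw [← Finset.add_sum_erase S (dg G S) hv, Finset.sum_congr rfl h1, Finset.sum_add_distrib, ← h2]
  ring

lemma sq_step (s d : ℕ) (hs : 1 ≤ s) (hd : d ≤ s / 2) : (s - 1) ^ 2 / 4 + d ≤ s ^ 2 / 4 := by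
  obtain ⟨t, rfl⟩ : ∃ t, s = t + 1 := ⟨s - 1, by omega⟩
  obtain ⟨m, rfl | rfl⟩ : ∃ m, t = 2 * m ∨ t = 2 * m + 1 := ⟨t / 2, by omega⟩
  · have e1 : (2 * m + 1 - 1) ^ 2 = 4 * (m * m) := by simp; ring
    have e2 : (2 * m + 1) ^ 2 = 4 * (m * m + m) + 1 := by ring
    rw [e1, e2]; omega
  · have e1 : (2 * m + 1 + 1 - 1) ^ 2 = 4 * (m * m + m) + 1 := by simp; ring
    have e2 : (2 * m + 1 + 1) ^ 2 = 4 * (m * m + 2 * m + 1) := by ring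
    rw [e1, e2]; omega

lemma exists_min (T : Finset V) (n : ℕ) : ∀ S : Finset V, S.card = n → T ⊆ S → Big G S →
    ∃ S', T ⊆ S' ∧ Big G S' ∧ ∀ v ∈ S', v ∉ T → S'.card / 2 + 1 ≤ dg G S' v := by
  induction n with
  | zero =>
    intro S hS hT hB
    refine ⟨S, hT, hB, ?_⟩
    rw [Finset.card_eq_zero] at hS
    subst hS
    simp
  | succ n ih =>
    intro S hS hT hB
    by_cases h : ∀ v ∈ S, v ∉ T → S.card / 2 + 1 ≤ dg G S v
    · exact ⟨S, hT, hB, h⟩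
    · push Not at h
      obtain ⟨v, hv, hvT, hd⟩ := h
      have hc : (S.erase v).card = S.card - 1 := Finset.card_erase_of_mem hv
      apply ih (S.erase v) (by omega)
      · intro x hx
        exact Finset.mem_erase.2 ⟨fun h => hvT (h ▸ hx), hT hx⟩
      · have h1 := DS_erase (G := G) S v hv
        have h2 := sq_step S.card (dg G S v) (by omega) (by omega)
        unfold Big at hB ⊢
        rw [hc]; omega

lemma triangle (S : Finset V) (hB : Big G S) : HasCycleLen G 3 := by
  obtain ⟨S', -, hB', hd⟩ := exists_min ∅ _ S rfl (by simp) hB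
  have hne : S'.Nonempty := by
    rw [Finset.nonempty_iff_ne_empty]
    rintro rfl
    simp [Big, DS] at hB'
  obtain ⟨u, hu⟩ := hne
  have hdu := hd u hu (by simp)
  have hpos : 0 < (S'.filter (G.Adj u)).card := by unfold dg at hdu; omega
  obtain ⟨v, hv⟩ := Finset.card_pos.1 hpos
  rw [Finset.mem_filter] at hv
  have hdv := hd v hv.1 (by simp)
  have hint : ¬ Disjoint (S'.filter (G.Adj u)) (S'.filter (G.Adj v)) := by
    intro hdis
    have h1 := Finset.card_union_of_disjoint hdis
    have h2 : (S'.filter (G.Adj u) ∪ S'.filter (G.Adj v)).card ≤ S'.card :=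
      Finset.card_le_card (Finset.union_subset (Finset.filter_subset _ _) (Finset.filter_subset _ _))
    unfold dg at hdu hdv
    omega
  rw [Finset.not_disjoint_iff] at hint
  obtain ⟨w, hw1, hw2⟩ := hint
  rw [Finset.mem_filter] at hw1 hw2
  have huv := hv.2
  have huw := hw1.2
  have hvw := hw2.2
  apply CycOn.hasCycleLen (f := fun i => if i = 0 then u else if i = 1 then v else w)
  refine ⟨⟨?_, ?_⟩, le_rfl, by simpa using huw.symm⟩
  · intro i j hi hj hij
    have := huv.ne
    have := huw.ne
    have := hvw.ne
    interval_cases i <;> interval_cases j <;> simp_all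
  · intro i hi
    have : i = 0 ∨ i = 1 := by omega
    rcases this with rfl | rfl
    · simpa using huv
    · simpa using hvw

/-- Bondy's degree count. -/
lemma bondy {f : ℕ → V} {m l : ℕ} (h : CycOn G f m) (hl : 3 ≤ l) (hlm : l < m)
    (S : Finset V) (hS : ∀ v ∈ S, ∃ i, i < m ∧ f i = v)
    (hd : m < dg G S (f 0) + dg G S (f 1)) : HasCycleLen G l := by
  by_contra hno
  set A := (Finset.Ico 2 m).filter (fun k => G.Adj (f 0) (f k)) with hA
  set B := (Finset.Ico 2 m).filter (fun k => G.Adj (f 1) (f k)) with hB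
  set ψ : ℕ → ℕ := fun k => if k ≤ m - l + 2 then k + l - 3 else k + l - m - 1 with hψ
  have hdis : Disjoint A (B.image ψ) := by
    rw [Finset.disjoint_left]
    intro a ha hb
    obtain ⟨k, hk, rfl⟩ := Finset.mem_image.1 hb
    simp only [hA, hB, Finset.mem_filter, Finset.mem_Ico] at ha hk
    by_cases hk2 : k ≤ m - l + 2
    · have e : ψ k = k + l - 3 := by simp [hψ, hk2]
      rw [e] at ha
      exact hno (bondy1 h hl hlm hk.1.1 (by omega) hk.2 ha.2)
    · have e : ψ k = k + l - m - 1 := by simp [hψ, hk2]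
      rw [e] at ha
      refine hno (bondy2 (k := k + l - m - 1) h hl hlm (by omega) (by omega) ?_ ha.2)
      rw [show k + l - m - 1 + m + 1 - l = k by omega]
      exact hk.2
  have hsub : A ∪ B.image ψ ⊆ Finset.Ico 2 m := by
    apply Finset.union_subset (Finset.filter_subset _ _)
    intro x hx
    obtain ⟨k, hk, rfl⟩ := Finset.mem_image.1 hx
    simp only [hB, Finset.mem_filter, Finset.mem_Ico] at hk
    simp only [hψ, Finset.mem_Ico]
    split_ifs <;> omega
  have hcard := Finset.card_le_card hsub
  rw [Finset.card_union_of_disjoint hdis, Nat.card_Ico, Finset.card_image_of_injOn] at hcard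
  · have hA1 : dg G S (f 0) ≤ A.card + 1 := by
      have : S.filter (G.Adj (f 0)) ⊆ insert (f 1) (A.image f) := by
        intro v hv
        rw [Finset.mem_filter] at hv
        obtain ⟨i, hi, rfl⟩ := hS v hv.1
        rw [Finset.mem_insert, Finset.mem_image]
        by_cases hi1 : i = 1
        · left; rw [hi1]
        · right
          have : i ≠ 0 := by rintro rfl; exact hv.2.ne rfl
          exact ⟨i, by simp only [hA, Finset.mem_filter, Finset.mem_Ico]; exact ⟨by omega, hv.2⟩, rfl⟩
      exact (Finset.card_le_card this).trans
        ((Finset.card_insert_le _ _).trans (by gcongr; exact Finset.card_image_le))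
    have hB1 : dg G S (f 1) ≤ B.card + 1 := by
      have : S.filter (G.Adj (f 1)) ⊆ insert (f 0) (B.image f) := by
        intro v hv
        rw [Finset.mem_filter] at hv
        obtain ⟨i, hi, rfl⟩ := hS v hv.1
        rw [Finset.mem_insert, Finset.mem_image]
        by_cases hi1 : i = 0
        · left; rw [hi1]
        · right
          have : i ≠ 1 := by rintro rfl; exact hv.2.ne rfl
          exact ⟨i, by simp only [hB, Finset.mem_filter, Finset.mem_Ico]; exact ⟨by omega, hv.2⟩, rfl⟩
      exact (Finset.card_le_card this).trans
        ((Finset.card_insert_le _ _).trans (by gcongr; exact Finset.card_image_le))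
    omega
  · intro x hx y hy hxy
    simp only [hB, Finset.coe_filter, Finset.mem_Ico, Set.mem_ofPred_eq] at hx hy
    simp only [hψ] at hxy
    split_ifs at hxy <;> omega

/-- Hamiltonian case. -/
lemma hamiltonian {c : ℕ} [NeZero c] {F : ZMod c → V} (hF : CycZ G F) (hc : 3 ≤ c) (l : ℕ)
    (hl : 3 ≤ l) (hlc : l < c) (hB : Big G (Finset.univ.image F)) : HasCycleLen G l := by
  set S := Finset.univ.image F with hS
  have hcard : S.card = c := by
    rw [hS, Finset.card_image_of_injective _ hF.1, Finset.card_univ, ZMod.card]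
  have hsum : DS G S = ∑ z, dg G S (F z) := by
    unfold DS
    rw [hS, Finset.sum_image (fun x _ y _ h => hF.1 h)]
  have hsum2 : DS G S = ∑ z, dg G S (F (z + 1)) := by
    rw [hsum]
    exact (Equiv.sum_comp (Equiv.addRight (1 : ZMod c)) (fun z => dg G S (F z))).symm
  by_contra hno
  have hle : ∀ z : ZMod c, dg G S (F z) + dg G S (F (z + 1)) ≤ c := by
    intro z
    by_contra hz
    apply hno
    apply bondy (hF.rot hc z) hl hlc S
    · intro v hv
      rw [hS, Finset.mem_image] at hv
      obtain ⟨y, -, rfl⟩ := hv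
      exact ⟨(y - z).val, ZMod.val_lt _, by simp⟩
    · simpa using hz
  have h2 : 2 * DS G S ≤ c * c := by
    calc 2 * DS G S = ∑ z : ZMod c, (dg G S (F z) + dg G S (F (z + 1))) := by
          rw [Finset.sum_add_distrib, ← hsum, ← hsum2, two_mul]
      _ ≤ ∑ z : ZMod c, c := Finset.sum_le_sum (fun z _ => hle z)
      _ = c * c := by simp [ZMod.card]
  unfold Big at hB
  rw [hcard, pow_two] at hB
  omega

/-- Neighbourhoods on a longest cycle of the ends of an outside path. -/
lemma cap {c : ℕ} [NeZero c] {F : ZMod c → V} (hF : CycZ G F) (hc : 3 ≤ c)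
    (hmax : ∀ l, HasCycleLen G l → l ≤ c) {g : ℕ → V} {p : ℕ} (hg : PathOn G g p) (hp : 1 ≤ p)
    (hdisj : ∀ z t, t < p → F z ≠ g t)
    (hA : 1 ≤ dg G (Finset.univ.image F) (g 0))
    (hB : 1 ≤ dg G (Finset.univ.image F) (g (p - 1))) :
    dg G (Finset.univ.image F) (g 0) + dg G (Finset.univ.image F) (g (p - 1)) + min p (c - 1)
      ≤ c + 1 := by
  have key : ∀ u, dg G (Finset.univ.image F) u =
      (Finset.univ.filter (fun z : ZMod c => G.Adj u (F z))).card := by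
    intro u
    unfold dg
    rw [Finset.filter_image, Finset.card_image_of_injective _ hF.1]
  rw [key] at hA hB
  rw [key, key]
  set A := Finset.univ.filter (fun z : ZMod c => G.Adj (g 0) (F z)) with hAd
  set B := Finset.univ.filter (fun z : ZMod c => G.Adj (g (p - 1)) (F z)) with hBd
  have hexcl : ∀ z ∈ B, ¬ ∃ j, 1 ≤ j ∧ j ≤ min p (c - 1) - 1 + 1 ∧ z - (j : ZMod c) ∈ A := by
    rintro z hz ⟨j, h1, h2, h3⟩
    simp only [hAd, hBd, Finset.mem_filter, Finset.mem_univ, true_and] at hz h3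
    have := attach (hF.rot hc (z - j)) hg (fun i t _ ht => hdisj _ t ht) hp h1 (by omega)
      (by omega) (by simpa using h3) (by simpa using hz)
    have := hmax _ this
    omega
  rcases cd A (Finset.card_pos.1 (by omega)) (min p (c - 1) - 1) with h | h
  · obtain ⟨z, hz⟩ := Finset.card_pos.1 (show 0 < B.card by omega)
    exact absurd (h z) (hexcl z hz)
  · set U := Finset.univ.filter
      (fun z : ZMod c => ∃ j, 1 ≤ j ∧ j ≤ min p (c - 1) - 1 + 1 ∧ z - (j : ZMod c) ∈ A) with hU
    have hdis : Disjoint B U := by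
      rw [Finset.disjoint_left]
      intro z hz hzU
      simp only [hU, Finset.mem_filter, Finset.mem_univ, true_and] at hzU
      exact hexcl z hz hzU
    have h1 := Finset.card_union_of_disjoint hdis
    have h2 := Finset.card_le_univ (B ∪ U)
    rw [ZMod.card] at h2
    omega

/-- The end of a path that cannot be extended inside `R`. -/
lemma end_deg {R : Finset V} {g : ℕ → V} {p : ℕ} (hg : PathOn G g p) (hp : 1 ≤ p)
    (hR : ∀ t, t < p → g t ∈ R)
    (hmax : ∀ g' p', PathOn G g' p' → (∀ t, t < p' → g' t ∈ R) → p' ≤ p) :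
    ∀ w ∈ R, G.Adj (g (p - 1)) w → ∃ i, i + 1 < p ∧ g i = w := by
  intro w hw hadj
  by_contra hno
  push Not at hno
  have hno' : ∀ i, i < p → g i ≠ w := by
    intro i hi
    by_cases h : i + 1 < p
    · exact hno i h
    · rw [show i = p - 1 by omega]; exact hadj.ne
  have := hmax (fun t => if t < p then g t else w) (p + 1) ⟨?_, ?_⟩ ?_
  · omega
  · intro i j hi hj hij
    try dsimp only at hij
    split_ifs at hij
    · exact hg.1 _ _ (by omega) (by omega) hij
    · exact absurd hij (hno' _ (by omega))
    · exact absurd hij.symm (hno' _ (by omega))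
    · omega
  · intro i hi
    try dsimp only
    rw [if_pos (by omega)]
    by_cases h : i + 1 < p
    · rw [if_pos h]; exact hg.2 i h
    · rw [if_neg h, show i = p - 1 by omega]; exact hadj
  · intro t ht
    try dsimp only
    split_ifs with h
    · exact hR t h
    · exact hw

lemma PathOn.card_le {R : Finset V} {g : ℕ → V} {p : ℕ} (hg : PathOn G g p)
    (hR : ∀ t, t < p → g t ∈ R) : p ≤ R.card := by
  have : ((Finset.range p).image g).card = p := by
    rw [Finset.card_image_of_injOn, Finset.card_range]
    intro i hi j hj hij
    simp at hi hj
    exact hg.1 i j hi hj hij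
  rw [← this]
  apply Finset.card_le_card
  intro v hv
  obtain ⟨t, ht, rfl⟩ := Finset.mem_image.1 hv
  exact hR t (by simpa using ht)

lemma exists_longest {R : Finset V} (hne : R.Nonempty) : ∃ g p, PathOn G g p ∧ 1 ≤ p ∧
    (∀ t, t < p → g t ∈ R) ∧
    (∀ g' p', PathOn G g' p' → (∀ t, t < p' → g' t ∈ R) → p' ≤ p) := by
  obtain ⟨v, hv⟩ := hne
  let P : ℕ → Prop := fun p => ∃ g, PathOn G g p ∧ ∀ t, t < p → g t ∈ R
  have h1 : P 1 := ⟨fun _ => v, ⟨fun i j hi hj _ => by omega, fun i hi => by omega⟩, fun _ _ => hv⟩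
  have hb : ∀ p, P p → p ≤ R.card := fun p ⟨g, hg, hR⟩ => hg.card_le hR
  have hR1 : 1 ≤ R.card := hb 1 h1
  obtain ⟨g, hg, hR⟩ := Nat.findGreatest_spec (P := P) hR1 h1
  refine ⟨g, _, hg, Nat.le_findGreatest hR1 h1, hR, fun g' p' hg' hR' => ?_⟩
  exact Nat.le_findGreatest (hg'.card_le hR') ⟨g', hg', hR'⟩

lemma cross_count {R : Finset V} {g : ℕ → V} {p : ℕ} (hg : PathOn G g p) (hp : 3 ≤ p)
    (h0 : ∀ w ∈ R, G.Adj (g 0) w → ∃ i, i + 1 < p ∧ g (i + 1) = w)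
    (h1 : ∀ w ∈ R, G.Adj (g (p - 1)) w → ∃ i, i + 1 < p ∧ g i = w)
    (hd : p ≤ dg G R (g 0) + dg G R (g (p - 1))) : HasCycleLen G p := by
  set I := (Finset.range (p - 1)).filter (fun i => G.Adj (g 0) (g (i + 1))) with hI
  set J := (Finset.range (p - 1)).filter (fun i => G.Adj (g (p - 1)) (g i)) with hJ
  have hI1 : dg G R (g 0) ≤ I.card := by
    have : R.filter (G.Adj (g 0)) ⊆ I.image (fun i => g (i + 1)) := by
      intro w hw
      rw [Finset.mem_filter] at hw
      obtain ⟨i, hi, rfl⟩ := h0 w hw.1 hw.2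
      exact Finset.mem_image.2 ⟨i, by
        simp only [hI, Finset.mem_filter, Finset.mem_range]; exact ⟨by omega, hw.2⟩, rfl⟩
    exact (Finset.card_le_card this).trans Finset.card_image_le
  have hJ1 : dg G R (g (p - 1)) ≤ J.card := by
    have : R.filter (G.Adj (g (p - 1))) ⊆ J.image g := by
      intro w hw
      rw [Finset.mem_filter] at hw
      obtain ⟨i, hi, rfl⟩ := h1 w hw.1 hw.2
      exact Finset.mem_image.2 ⟨i, by
        simp only [hJ, Finset.mem_filter, Finset.mem_range]; exact ⟨by omega, hw.2⟩, rfl⟩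
    exact (Finset.card_le_card this).trans Finset.card_image_le
  have hint : ¬ Disjoint I J := by
    intro hdis
    have e1 := Finset.card_union_of_disjoint hdis
    have e2 : (I ∪ J).card ≤ (Finset.range (p - 1)).card :=
      Finset.card_le_card (Finset.union_subset (Finset.filter_subset _ _) (Finset.filter_subset _ _))
    rw [Finset.card_range] at e2
    omega
  rw [Finset.not_disjoint_iff] at hint
  obtain ⟨i, hi, hj⟩ := hint
  simp only [hI, hJ, Finset.mem_filter, Finset.mem_range] at hi hj
  exact crossing hg hp (by omega) hi.2 hj.2.symm

lemma dg_le {R : Finset V} {g : ℕ → V} {p : ℕ} (v : V)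
    (h1 : ∀ w ∈ R, G.Adj v w → ∃ i, i + 1 < p ∧ g i = w) : dg G R v ≤ p - 1 := by
  have : R.filter (G.Adj v) ⊆ (Finset.range (p - 1)).image g := by
    intro w hw
    rw [Finset.mem_filter] at hw
    obtain ⟨i, hi, rfl⟩ := h1 w hw.1 hw.2
    exact Finset.mem_image.2 ⟨i, by simp; omega, rfl⟩
  exact (Finset.card_le_card this).trans (Finset.card_image_le.trans (by simp))

lemma no_rest {c : ℕ} [NeZero c] {F : ZMod c → V} (hF : CycZ G F) (hc : 3 ≤ c)
    (hmax : ∀ l, HasCycleLen G l → l ≤ c) (S : Finset V) (hTS : Finset.univ.image F ⊆ S)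
    (hd : ∀ v ∈ S, v ∉ Finset.univ.image F → S.card / 2 + 1 ≤ dg G S v) :
    S = Finset.univ.image F := by
  set T := Finset.univ.image F with hT
  by_contra hne
  have hTc : T.card = c := by
    rw [hT, Finset.card_image_of_injective _ hF.1, Finset.card_univ, ZMod.card]
  set R := S \ T with hR
  have hRne : R.Nonempty := by
    rw [hR, Finset.sdiff_nonempty]
    exact fun h => hne (Finset.Subset.antisymm h hTS)
  have hRc : R.card + c = S.card := by
    rw [← hTc]; exact Finset.card_sdiff_add_card_eq_card hTS
  have hsplit : ∀ v, dg G S v = dg G R v + dg G T v := by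
    intro v
    unfold dg
    rw [← Finset.card_union_of_disjoint, ← Finset.filter_union, hR, Finset.sdiff_union_of_subset hTS]
    exact Finset.disjoint_filter_filter Finset.sdiff_disjoint
  have hdR : ∀ v ∈ R, S.card / 2 + 1 ≤ dg G R v + dg G T v := by
    intro v hv
    rw [hR, Finset.mem_sdiff] at hv
    rw [← hsplit]
    exact hd v hv.1 hv.2
  have hdis : ∀ v ∈ R, ∀ z, F z ≠ v := by
    intro v hv z hz
    rw [hR, Finset.mem_sdiff] at hv
    exact hv.2 (Finset.mem_image.2 ⟨z, Finset.mem_univ _, hz⟩)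
  have hhalf : ∀ v ∈ R, 2 * dg G T v ≤ c := by
    intro v hv
    by_cases h0 : 1 ≤ dg G T v
    · have := cap hF hc hmax (g := fun _ => v) (p := 1)
        ⟨fun i j hi hj _ => by omega, fun i hi => by omega⟩ le_rfl
        (fun z t _ => hdis v hv z) h0 h0
      rw [← hT] at this
      omega
    · omega
  obtain ⟨g, p, hg, hp, hgR, hlong⟩ := exists_longest (G := G) hRne
  have hpR := hg.card_le hgR
  have hend1 := end_deg hg hp hgR hlong
  have hend0' := end_deg hg.reverse hp (fun t ht => hgR _ (by omega)) hlong
  have hend0 : ∀ w ∈ R, G.Adj (g 0) w → ∃ i, i + 1 < p ∧ g (i + 1) = w := by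
    intro w hw ha
    obtain ⟨i, hi, e⟩ := hend0' w hw (by simpa using ha)
    refine ⟨p - 2 - i, by omega, ?_⟩
    rw [← e]; congr 1; omega
  have e0 : dg G R (g 0) ≤ p - 1 := dg_le (g := fun i => g (i + 1)) _ hend0
  have e1 : dg G R (g (p - 1)) ≤ p - 1 := dg_le (g := g) _ hend1
  have m0 := hgR 0 (by omega)
  have m1 := hgR (p - 1) (by omega)
  have a0 := hdR _ m0
  have a1 := hdR _ m1
  have b0 := hhalf _ m0
  have b1 := hhalf _ m1
  have hpc : p ≤ c := by
    by_contra hpc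
    have := hmax _ (cross_count hg (by omega) hend0 hend1 (by omega))
    omega
  have := cap hF hc hmax hg hp (fun z t ht => hdis _ (hgR t ht) z)
    (by rw [← hT]; omega) (by rw [← hT]; omega)
  rw [← hT] at this
  omega

theorem main [Fintype V] (hB : Big G (Finset.univ : Finset V)) : WeaklyPancyclic3 G := by
  have htri := triangle _ hB
  refine ⟨htri, fun l hl hlc => ?_⟩
  have hbdd : BddAbove {l | HasCycleLen G l} := by
    refine ⟨(Finset.univ : Finset V).card, ?_⟩
    rintro l hl
    obtain ⟨f, hf⟩ := exists_cycOn hl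
    exact hf.1.card_le (fun _ _ => Finset.mem_univ _)
  have hmem : HasCycleLen G (circumference G) := Nat.sSup_mem ⟨3, htri⟩ hbdd
  have hmax : ∀ l, HasCycleLen G l → l ≤ circumference G := fun l hl => le_csSup hbdd hl
  rcases hlc.eq_or_lt with rfl | hlt
  · exact hmem
  have : NeZero (circumference G) := ⟨by omega⟩
  obtain ⟨f, hf⟩ := exists_cycOn hmem
  have hF := hf.cycZ
  set F : ZMod (circumference G) → V := fun z => f z.val
  obtain ⟨S, h1, h2, h3⟩ := exists_min (Finset.univ.image F) _ _ rfl (Finset.subset_univ _) hB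
  rw [no_rest hF (by omega) hmax S h1 h3] at h2
  exact hamiltonian hF (by omega) l hl hlt h2

lemma DS_univ [Fintype V] : DS G Finset.univ = 2 * edgeCount G := by
  have h := G.sum_degrees_eq_twice_card_edges
  rw [edgeCount, Nat.card_eq_fintype_card, ← SimpleGraph.edgeFinset_card, ← h]
  unfold DS
  refine Finset.sum_congr rfl fun v _ => ?_
  unfold dg
  rw [← SimpleGraph.card_neighborFinset_eq_degree, SimpleGraph.neighborFinset_eq_filter]

end WP

/-- Weak pancyclicity part of Theorem 2.1. -/
theorem weakly_pancyclic_of_many_edges (k n : ℕ) (G : SimpleGraph (Fin n))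
    (hn : 2 * k + 5 ≤ n)
    (he : (n - k - 1).choose 2 + (k + 2).choose 2 ≤ edgeCount G) :
    WeaklyPancyclic3 G := by
  apply WP.main
  unfold WP.Big
  rw [WP.DS_univ, Finset.card_univ, Fintype.card_fin]
  obtain ⟨t, rfl⟩ : ∃ t, n = 2 * k + 5 + t := ⟨n - (2 * k + 5), by omega⟩
  rw [show 2 * k + 5 + t - k - 1 = k + t + 4 by omega] at he
  have h1 : (k + t + 4).choose 2 * 2 = (k + t + 4) * (k + t + 3) := by
    rw [Nat.choose_two_right, Nat.div_mul_cancel (Nat.even_mul_pred_self _).two_dvd]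
    rfl
  have h2 : (k + 2).choose 2 * 2 = (k + 2) * (k + 1) := by
    rw [Nat.choose_two_right, Nat.div_mul_cancel (Nat.even_mul_pred_self _).two_dvd]
    rfl
  have h3 : (2 * k + 5 + t) ^ 2 < 4 * edgeCount G := by
    nlinarith
  omega
end
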